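/- Let G be a finite pseudo-solvable group and Γ̄ the complement of its prime graph. For a prime r dividing |G| with r ∉ {2,3,5}, define its pattern as the triple of truth values (r Γ̄-adjacent to 3, r Γ̄-adjacent to 5, r Γ̄-adjacent to 2). Then exactly one of the following holds: (1) Γ̄ is 3-colorable and triangle-free; (2) Γ̄ is 3-colorable, 2, 3, 5 divide |G|, G has no elements of orders 6, 10, 15, and every prime r ∉ {2,3,5} dividing |G| is Γ̄-non-adjacent to 2 and to 3 (i.e., the only possible Γ̄-edge from r to {2,3,5} is 5–r); (3) Γ̄ is 3-colorable, there is a prime p ∉ {2,3,5} dividing |G| with 3, 5 dividing |G| and G having no elements of orders 3p, 5p, 15, and every prime r ∉ {2,3,5} dividing |G| has pattern in {(0,0,0),(1,1,1),(0,1,0),(0,1,1),(0,0,1)}; (4) Γ̄ is 3-colorable, there is a prime p ∉ {2,3,5} dividing |G| with 3, 5 dividing |G| and G having no elements of orders 3p, 5p, 15, and every prime r ∉ {2,3,5} dividing |G| has pattern in {(0,0,0),(0,1,0),(1,1,0)}. -/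

import Mathlib

/-- A finite group is *pseudo-solvable* if it has a subnormal series whose factors are
all cyclic or isomorphic to the alternating group `A₅`. -/
def IsPseudoSolvable (G : Type*) [Group G] : Prop :=
  ∃ (n : ℕ) (H : Fin (n + 1) → Subgroup G),
    H 0 = ⊥ ∧ H (Fin.last n) = ⊤ ∧
    ∀ i : Fin n, H i.castSucc ≤ H i.succ ∧
      ∃ hN : ((H i.castSucc).subgroupOf (H i.succ)).Normal,
        haveI := hN
        IsCyclic (H i.succ ⧸ (H i.castSucc).subgroupOf (H i.succ)) ∨
        Nonempty ((H i.succ ⧸ (H i.castSucc).subgroupOf (H i.succ)) ≃* alternatingGroup (Fin 5))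

/-- `a` and `b` are adjacent in the complement of the prime graph of `G`: they are
distinct primes dividing `|G|` and `G` has no element of order `ab`. -/
def CompAdj (G : Type*) [Group G] (a b : ℕ) : Prop :=
  a.Prime ∧ b.Prime ∧ a ≠ b ∧ a ∣ Nat.card G ∧ b ∣ Nat.card G ∧
    ¬ ∃ g : G, orderOf g = a * b

/-- The complement of the prime graph of `G` is 3-colorable. -/
def CompColorable3 (G : Type*) [Group G] : Prop :=
  ∃ c : ℕ → Fin 3, ∀ a b : ℕ, CompAdj G a b → c a ≠ c b

/-- Category (1): the complement is 3-colorable and triangle-free. -/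
def Cat1 (G : Type*) [Group G] : Prop :=
  CompColorable3 G ∧
    ¬ ∃ a b c : ℕ, CompAdj G a b ∧ CompAdj G a c ∧ CompAdj G b c

/-- Category (2): the complement is 3-colorable, `{2,3,5}` is a triangle, and every
other prime `r` is non-adjacent to `2` and `3` in the complement. -/
def Cat2 (G : Type*) [Group G] : Prop :=
  CompColorable3 G ∧
    2 ∣ Nat.card G ∧ 3 ∣ Nat.card G ∧ 5 ∣ Nat.card G ∧
    (¬ ∃ g : G, orderOf g = 6) ∧ (¬ ∃ g : G, orderOf g = 10) ∧
    (¬ ∃ g : G, orderOf g = 15) ∧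
    ∀ r : ℕ, r.Prime → r ∣ Nat.card G → r ∉ ({2, 3, 5} : Set ℕ) →
      ¬ CompAdj G r 2 ∧ ¬ CompAdj G r 3

/-- Category (3): the complement is 3-colorable, `{p,3,5}` is a triangle for some
prime `p ∉ {2,3,5}`, and the adjacency pattern `(r-3, r-5, r-2)` of every other
prime `r` belongs to `{(0,0,0),(1,1,1),(0,1,0),(0,1,1),(0,0,1)}` (Figure 2). -/
def Cat3 (G : Type*) [Group G] : Prop :=
  CompColorable3 G ∧
    (∃ p : ℕ, p.Prime ∧ p ∉ ({2, 3, 5} : Set ℕ) ∧ p ∣ Nat.card G ∧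
      3 ∣ Nat.card G ∧ 5 ∣ Nat.card G ∧
      (¬ ∃ g : G, orderOf g = 3 * p) ∧ (¬ ∃ g : G, orderOf g = 5 * p) ∧
      (¬ ∃ g : G, orderOf g = 15)) ∧
    ∀ r : ℕ, r.Prime → r ∣ Nat.card G → r ∉ ({2, 3, 5} : Set ℕ) →
      ((¬ CompAdj G r 3 ∧ ¬ CompAdj G r 5 ∧ ¬ CompAdj G r 2) ∨
       (CompAdj G r 3 ∧ CompAdj G r 5 ∧ CompAdj G r 2) ∨
       (¬ CompAdj G r 3 ∧ CompAdj G r 5 ∧ ¬ CompAdj G r 2) ∨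
       (¬ CompAdj G r 3 ∧ CompAdj G r 5 ∧ CompAdj G r 2) ∨
       (¬ CompAdj G r 3 ∧ ¬ CompAdj G r 5 ∧ CompAdj G r 2))

/-- Category (4): the complement is 3-colorable, `{p,3,5}` is a triangle for some
prime `p ∉ {2,3,5}`, and the adjacency pattern `(r-3, r-5, r-2)` of every other
prime `r` belongs to `{(0,0,0),(0,1,0),(1,1,0)}` (Figure 3). -/
def Cat4 (G : Type*) [Group G] : Prop :=
  CompColorable3 G ∧
    (∃ p : ℕ, p.Prime ∧ p ∉ ({2, 3, 5} : Set ℕ) ∧ p ∣ Nat.card G ∧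
      3 ∣ Nat.card G ∧ 5 ∣ Nat.card G ∧
      (¬ ∃ g : G, orderOf g = 3 * p) ∧ (¬ ∃ g : G, orderOf g = 5 * p) ∧
      (¬ ∃ g : G, orderOf g = 15)) ∧
    ∀ r : ℕ, r.Prime → r ∣ Nat.card G → r ∉ ({2, 3, 5} : Set ℕ) →
      ((¬ CompAdj G r 3 ∧ ¬ CompAdj G r 5 ∧ ¬ CompAdj G r 2) ∨
       (¬ CompAdj G r 3 ∧ CompAdj G r 5 ∧ ¬ CompAdj G r 2) ∨
       (CompAdj G r 3 ∧ CompAdj G r 5 ∧ ¬ CompAdj G r 2))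

universe u

def HasOrd (G : Type*) [Group G] (n : ℕ) : Prop := ∃ g : G, orderOf g = n

section basics
variable {G H : Type*} [Group G] [Group H]

lemma HasOrd.of_dvd [Finite G] {g : G} {n : ℕ} (h : n ∣ orderOf g) : HasOrd G n := by
  obtain ⟨m, hm⟩ := h
  have h0 := orderOf_pos g
  have hm0 : m ≠ 0 := by rintro rfl; omega
  refine ⟨g ^ m, ?_⟩
  rw [orderOf_pow_of_dvd hm0 (hm ▸ dvd_mul_left m n), hm]
  exact Nat.mul_div_cancel _ (Nat.pos_of_ne_zero hm0)

lemma HasOrd.of_surj [Finite G] (f : G →* H) (hf : Function.Surjective f) {n : ℕ}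
    (h : HasOrd H n) : HasOrd G n := by
  obtain ⟨y, rfl⟩ := h
  obtain ⟨x, rfl⟩ := hf y
  exact HasOrd.of_dvd (orderOf_map_dvd f x)

lemma HasOrd.of_inj (f : G →* H) (hf : Function.Injective f) {n : ℕ}
    (h : HasOrd G n) : HasOrd H n := by
  obtain ⟨y, rfl⟩ := h
  exact ⟨f y, orderOf_injective f hf y⟩

lemma HasOrd.of_sub {K : Subgroup G} {n : ℕ} (h : HasOrd K n) : HasOrd G n :=
  HasOrd.of_inj K.subtype K.subtype_injective h

lemma HasOrd.of_quot [Finite G] {N : Subgroup G} [N.Normal] {n : ℕ} (h : HasOrd (G ⧸ N) n) :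
    HasOrd G n :=
  HasOrd.of_surj (QuotientGroup.mk' N) (QuotientGroup.mk'_surjective N) h

lemma HasOrd.of_commute {a b : G} {p q : ℕ} (hp : p.Prime) (hq : q.Prime) (hne : p ≠ q)
    (ha : orderOf a = p) (hb : orderOf b = q) (h : Commute a b) : HasOrd G (p * q) := by
  refine ⟨a * b, ?_⟩
  rw [h.orderOf_mul_eq_mul_orderOf_of_coprime, ha, hb]
  rw [ha, hb]; exact (Nat.coprime_primes hp hq).2 hne

lemma HasOrd.symm {p q : ℕ} (h : HasOrd G (p * q)) : HasOrd G (q * p) := by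
  rwa [mul_comm]

lemma exists_ord [Finite G] {p : ℕ} (hp : p.Prime) (h : p ∣ Nat.card G) :
    ∃ g : G, orderOf g = p := by
  have := Fact.mk hp
  exact exists_prime_orderOf_dvd_card' p h

lemma orderOf_prime_of {g : G} {p : ℕ} (hp : p.Prime) (h : g ^ p = 1) (h1 : g ≠ 1) :
    orderOf g = p := by
  have := Fact.mk hp
  exact orderOf_eq_prime h h1

lemma ne_one_of_ord {g : G} {p : ℕ} (hp : p.Prime) (h : orderOf g = p) : g ≠ 1 := by
  rintro rfl
  rw [orderOf_one] at h
  exact hp.one_lt.ne h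

/-- element of a `p'`-subgroup killed by `p` is trivial -/
lemma eq_one_of_mem_p' [Finite G] {N : Subgroup G} {p : ℕ} (hp : p.Prime)
    (hN : ¬ p ∣ Nat.card N) {g : G} (hg : g ∈ N) (h : g ^ p = 1) : g = 1 := by
  by_contra h1
  have := orderOf_prime_of hp h h1
  apply hN
  rw [← this, ← Subgroup.orderOf_mk g hg]
  exact orderOf_dvd_natCard _

lemma dvd_card_of_mem [Finite G] {N : Subgroup G} {p : ℕ}
     {g : G} (hg : g ∈ N) (h : orderOf g = p) : p ∣ Nat.card N := by
  rw [← h, ← Subgroup.orderOf_mk g hg]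
  exact orderOf_dvd_natCard _

/-- maps preserve order p when not killed -/
lemma orderOf_map_prime {g : G} {p : ℕ} (hp : p.Prime) (h : orderOf g = p) (f : G →* H)
    (h1 : f g ≠ 1) : orderOf (f g) = p :=
  orderOf_prime_of hp (by rw [← map_pow, ← h, pow_orderOf_eq_one, map_one]) h1

lemma lift_order [Finite G] (f : G →* H) (g₀ : G) {q : ℕ} (hq : q.Prime)
    (hy : orderOf (f g₀) = q) (hk : ¬ q ∣ Nat.card f.ker) :
    ∃ g : G, orderOf g = q ∧ f g = f g₀ ∧ ∃ m : ℕ, g = g₀ ^ m := by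
  have hc : Nat.Coprime (Nat.card f.ker) q := ((Nat.Prime.coprime_iff_not_dvd hq).2 hk).symm
  obtain ⟨m, hm1, hm2⟩ := Nat.chineseRemainder hc 0 1
  have h1 : f (g₀ ^ m) = f g₀ := by
    rw [map_pow]
    conv_rhs => rw [← pow_one (f g₀)]
    rw [pow_eq_pow_iff_modEq, hy]; exact hm2
  have h2 : (g₀ ^ m) ^ q = 1 := by
    obtain ⟨k, hk⟩ := (Nat.modEq_zero_iff_dvd.1 hm1)
    rw [← pow_mul, mul_comm, hk, ← mul_assoc, pow_mul, pow_mul]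
    have : g₀ ^ q ∈ f.ker := by rw [MonoidHom.mem_ker, map_pow, ← hy, pow_orderOf_eq_one]
    have h3 : (g₀ ^ q) ^ Nat.card f.ker = 1 := by
      have := pow_card_eq_one' (x := (⟨_, this⟩ : f.ker))
      simpa [Subtype.ext_iff] using this
    rw [h3, one_pow]
  refine ⟨g₀ ^ m, orderOf_prime_of hq h2 ?_, h1, m, rfl⟩
  intro h3
  rw [h3, map_one] at h1
  exact ne_one_of_ord hq hy h1.symm

lemma exists_ppart [Finite G] (g : G) {p : ℕ} (hp : p.Prime) :
    ∃ m k : ℕ, m ≡ 1 [MOD p] ∧ orderOf (g ^ m) = p ^ k := by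
  have h0 := (orderOf_pos g).ne'
  obtain ⟨a, n, hn, hgn⟩ := Nat.exists_eq_pow_mul_and_not_dvd h0 p hp.ne_one
  have hc : Nat.Coprime n p := ((Nat.Prime.coprime_iff_not_dvd hp).2 hn).symm
  obtain ⟨m, hm1, hm2⟩ := Nat.chineseRemainder hc 0 1
  obtain ⟨c, rfl⟩ := (Nat.modEq_zero_iff_dvd.1 hm1)
  have h2 : (g ^ (n * c)) ^ (p ^ a) = 1 := by
    rw [← pow_mul, show n * c * p ^ a = (p ^ a * n) * c by ring, ← hgn, pow_mul, pow_orderOf_eq_one,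
      one_pow]
  obtain ⟨k, -, hk⟩ := (Nat.dvd_prime_pow hp).1 (orderOf_dvd_of_pow_eq_one h2)
  exact ⟨_, k, hm2, hk⟩

def Rank1 (p : ℕ) (G : Type*) [Group G] : Prop :=
  ∀ a b : G, orderOf a = p → orderOf b = p → Commute a b → b ∈ Subgroup.zpowers a

lemma Rank1.of_ker {p : ℕ} (hp : p.Prime) (f : G →* H) (hf : ∀ g, f g = 1 → g ^ p = 1 → g = 1)
    (h : Rank1 p H) : Rank1 p G := by
  intro a b ha hb hab
  have hap : a ^ p = 1 := by rw [← ha, pow_orderOf_eq_one]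
  have hbp : b ^ p = 1 := by rw [← hb, pow_orderOf_eq_one]
  have ha' := orderOf_map_prime hp ha f (fun h => ne_one_of_ord hp ha (hf _ h hap))
  have hb' := orderOf_map_prime hp hb f (fun h => ne_one_of_ord hp hb (hf _ h hbp))
  obtain ⟨k, hk⟩ := Subgroup.mem_zpowers_iff.1 (h _ _ ha' hb' (hab.map f))
  have h1 : b * (a ^ k)⁻¹ = 1 := by
    apply hf
    · rw [map_mul, map_inv, map_zpow, hk, mul_inv_cancel]
    · have hc : Commute b (a ^ k)⁻¹ := (hab.symm.zpow_right k).inv_right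
      rw [hc.mul_pow, hbp, inv_pow, ← zpow_natCast, ← zpow_mul, mul_comm, zpow_mul, zpow_natCast,
        hap, one_zpow]; simp
  exact Subgroup.mem_zpowers_iff.2 ⟨k, (mul_inv_eq_one.1 h1).symm⟩

lemma Rank1.of_inj {p : ℕ} (hp : p.Prime) (f : G →* H) (hf : Function.Injective f)
    (h : Rank1 p H) : Rank1 p G :=
  h.of_ker hp f (fun g hg _ => hf (by rw [hg, map_one]))

lemma Rank1.sub {p : ℕ} (hp : p.Prime) (K : Subgroup G) (h : Rank1 p G) : Rank1 p K :=
  h.of_inj hp K.subtype K.subtype_injective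

lemma Rank1.of_quot [Finite G] {p : ℕ} (hp : p.Prime) (N : Subgroup G) [N.Normal]
    (hN : ¬ p ∣ Nat.card N) (h : Rank1 p (G ⧸ N)) : Rank1 p G :=
  h.of_ker hp (QuotientGroup.mk' N) (fun g hg h1 =>
    eq_one_of_mem_p' hp hN ((QuotientGroup.eq_one_iff g).1 hg) h1)

lemma Rank1.of_card [Finite G] {p : ℕ} (hp : p.Prime) (h : ¬ p ^ 2 ∣ Nat.card G) : Rank1 p G := by
  intro a b ha hb hab
  by_contra hn
  have := Fact.mk hp
  have hA : Nat.card (Subgroup.zpowers a) = p := by rw [Nat.card_zpowers, ha]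
  have hB : Nat.card (Subgroup.zpowers b) = p := by rw [Nat.card_zpowers, hb]
  -- the map (i,j) ↦ a^i b^j
  have hd : Disjoint (Subgroup.zpowers a) (Subgroup.zpowers b) := by
    rw [Subgroup.disjoint_def]
    intro x hx hx'
    by_contra hx1
    have hxp : Nat.card (Subgroup.zpowers x) = p := by
      have h2 : Nat.card (Subgroup.zpowers x) ∣ p := by
        rw [← hB]; exact Subgroup.card_dvd_of_le (Subgroup.zpowers_le.2 hx')
      rcases (Nat.dvd_prime hp).1 h2 with h3 | h3
      · rw [Nat.card_zpowers, orderOf_eq_one_iff] at h3; exact absurd h3 hx1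
      · exact h3
    have e1 : Subgroup.zpowers x = Subgroup.zpowers b :=
      Subgroup.eq_of_le_of_card_ge (Subgroup.zpowers_le.2 hx') (by rw [hxp, hB])
    apply hn
    have : b ∈ Subgroup.zpowers x := e1 ▸ Subgroup.mem_zpowers b
    exact (Subgroup.zpowers_le.2 hx) this
  have hle : ∀ x ∈ Subgroup.zpowers a, ∀ y ∈ Subgroup.zpowers b, Commute x y := by
    rintro x ⟨i, rfl⟩ y ⟨j, rfl⟩
    exact (hab.zpow_left i).zpow_right j
  let f : Subgroup.zpowers a × Subgroup.zpowers b →* G :=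
    MonoidHom.noncommCoprod (Subgroup.zpowers a).subtype (Subgroup.zpowers b).subtype
      (fun x y => hle _ x.2 _ y.2)
  have hf : Function.Injective f := by
    rw [injective_iff_map_eq_one]
    rintro ⟨⟨x, hx⟩, ⟨y, hy⟩⟩ hxy
    have hxy : x * y = 1 := hxy
    have h1 : x = 1 := by
      refine (Subgroup.disjoint_def.1 hd) hx ?_
      rw [eq_inv_of_mul_eq_one_left hxy]; exact inv_mem hy
    subst h1
    have : y = 1 := by simpa using hxy
    subst this
    rfl
  apply h
  have := Subgroup.card_dvd_of_injective f hf
  rwa [Nat.card_prod, hA, hB, ← sq] at this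

end basics

abbrev A5 := alternatingGroup (Fin 5)

inductive PSI : (G : Type u) → Group G → Prop
  | sol (G : Type u) (i : Group G) (h : Group.IsSolvable G) : PSI G i
  | alt (G : Type u) (i : Group G) (h : Nonempty (G ≃* A5)) : PSI G i
  | ext (G : Type u) (i : Group G) (N : Subgroup G) (hN : N.Normal)
      (h1 : PSI N inferInstance) (h2 : PSI (G ⧸ N) inferInstance) : PSI G i

def PS (G : Type u) [i : Group G] : Prop := PSI G i

instance A5_simple : IsSimpleGroup A5 := alternatingGroup.isSimpleGroup (by simp)

lemma A5_card : Nat.card A5 = 60 := by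
  rw [nat_card_alternatingGroup]; simp; decide

section
variable {G H : Type u} [Group G] [Group H]

lemma PS.inj (h : PS G) : ∀ {H : Type u} [Group H] (f : H →* G),
    Function.Injective f → f.range.Normal → PS H := by
  unfold PS at h
  rename_i i
  induction h with
  | sol G i h =>
    intro H _ f hf _
    exact PSI.sol _ _ (Group.isSolvable_of_isSolvable_injective hf)
  | alt G i h =>
    intro H _ f hf hn
    obtain ⟨e⟩ := h
    have : IsSimpleGroup G := e.isSimpleGroup
    rcases hn.eq_bot_or_eq_top with h | h
    · have : Subsingleton H := by
        refine ⟨fun a b => hf ?_⟩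
        have ha : f a ∈ f.range := ⟨a, rfl⟩
        have hb : f b ∈ f.range := ⟨b, rfl⟩
        rw [h, Subgroup.mem_bot] at ha hb
        rw [ha, hb]
      exact PSI.sol _ _ inferInstance
    · exact PSI.alt _ _ ⟨(MulEquiv.ofBijective f ⟨hf, MonoidHom.range_eq_top.1 h⟩).trans e⟩
  | ext G i N hN h1 h2 ih1 ih2 =>
    intro H _ f hf hn
    refine PSI.ext H _ (N.comap f) inferInstance ?_ ?_
    · refine ih1 (f.subgroupComap N) ?_ ?_
      · intro a b hab
        exact Subtype.ext (hf (congrArg Subtype.val hab))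
      · constructor
        rintro _ ⟨⟨a, ha⟩, rfl⟩ g
        obtain ⟨b, hb⟩ := hn.conj_mem (f a) ⟨a, rfl⟩ g
        refine ⟨⟨b, ?_⟩, Subtype.ext hb⟩
        rw [Subgroup.mem_comap, hb]
        exact (g * ⟨f a, ha⟩ * g⁻¹ : N).2
    · refine ih2 (QuotientGroup.map _ _ f le_rfl) ?_ ?_
      · rw [injective_iff_map_eq_one]
        intro a
        induction a using QuotientGroup.induction_on with | H a =>
        intro ha
        rw [QuotientGroup.map_mk, QuotientGroup.eq_one_iff] at ha
        exact (QuotientGroup.eq_one_iff a).2 ha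
      · constructor
        rintro _ ⟨a, rfl⟩ g
        induction a using QuotientGroup.induction_on with | H a =>
        induction g using QuotientGroup.induction_on with | H g =>
        obtain ⟨b, hb⟩ := hn.conj_mem (f a) ⟨a, rfl⟩ g
        refine ⟨(b : H ⧸ N.comap f), ?_⟩
        rw [QuotientGroup.map_mk, QuotientGroup.map_mk, hb]
        rfl

lemma PS.surj (h : PS G) : ∀ {H : Type u} [Group H] (f : G →* H),
    Function.Surjective f → PS H := by
  unfold PS at h
  rename_i i
  induction h with
  | sol G i h =>
    intro H _ f hf
    exact PSI.sol _ _ (Group.isSolvable_of_surjective hf)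
  | alt G i h =>
    intro H _ f hf
    obtain ⟨e⟩ := h
    have : IsSimpleGroup G := e.isSimpleGroup
    rcases (inferInstance : f.ker.Normal).eq_bot_or_eq_top with h | h
    · exact PSI.alt _ _ ⟨(MulEquiv.ofBijective f ⟨(MonoidHom.ker_eq_bot_iff f).1 h, hf⟩).symm.trans e⟩
    · have : Subsingleton H := by
        refine ⟨fun a b => ?_⟩
        obtain ⟨a, rfl⟩ := hf a
        obtain ⟨b, rfl⟩ := hf b
        have ha : a ∈ f.ker := h ▸ Subgroup.mem_top _
        have hb : b ∈ f.ker := h ▸ Subgroup.mem_top _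
        rw [MonoidHom.mem_ker] at ha hb
        rw [ha, hb]
      exact PSI.sol _ _ inferInstance
  | ext G i N hN h1 h2 ih1 ih2 =>
    intro H _ f hf
    have hn : (N.map f).Normal := hN.map f hf
    refine PSI.ext H _ (N.map f) hn ?_ ?_
    · exact ih1 (f.subgroupMap N) (f.subgroupMap_surjective N)
    · refine ih2 (QuotientGroup.map N (N.map f) f (Subgroup.le_comap_map f N)) ?_
      intro a
      induction a using QuotientGroup.induction_on with | H a =>
      obtain ⟨b, rfl⟩ := hf a
      exact ⟨(b : G ⧸ N), rfl⟩

lemma PS.equiv (h : PS G) (e : G ≃* H) : PS H := h.surj e.toMonoidHom e.surjective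

lemma PS.normal (h : PS G) (N : Subgroup G) [hN : N.Normal] : PS N :=
  h.inj N.subtype N.subtype_injective (by rwa [N.range_subtype])

lemma PS.quot (h : PS G) (N : Subgroup G) [hN : N.Normal] : PS (G ⧸ N) :=
  h.surj _ (QuotientGroup.mk'_surjective N)

lemma PS.of_sol (h : Group.IsSolvable G) : PS G := PSI.sol _ _ h

lemma PS.of_ext (N : Subgroup G) [N.Normal] (h1 : PS N) (h2 : PS (G ⧸ N)) : PS G :=
  PSI.ext _ _ N inferInstance h1 h2

lemma not_sol_A5 : ¬ Group.IsSolvable A5 := by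
  intro h
  have := (IsSimpleGroup.comm_iff_isSolvable (G := A5)).2 h
  have h2 := this ⟨Equiv.swap 0 1 * Equiv.swap 1 2, by rw [Equiv.Perm.mem_alternatingGroup]; decide⟩
    ⟨Equiv.swap 0 1 * Equiv.swap 1 3, by rw [Equiv.Perm.mem_alternatingGroup]; decide⟩
  exact absurd (congrArg Subtype.val h2) (by decide)

lemma sol_of_ext (N : Subgroup G) [N.Normal] (h1 : Group.IsSolvable N)
    (h2 : Group.IsSolvable (G ⧸ N)) : Group.IsSolvable G :=
  (Group.isSolvable_iff_subgroup_quotient N).2 ⟨h1, h2⟩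

lemma PS.card_dvd (h : PS G) (hs : ¬ Group.IsSolvable G) : 60 ∣ Nat.card G := by
  unfold PS at h
  rename_i i
  induction h with
  | sol G i h => exact absurd h hs
  | alt G i h =>
    obtain ⟨e⟩ := h
    rw [Nat.card_congr e.toEquiv, A5_card]
  | ext G i N hN h1 h2 ih1 ih2 =>
    by_cases hN' : Group.IsSolvable N
    · have : ¬ Group.IsSolvable (G ⧸ N) := fun h => hs (sol_of_ext N hN' h)
      exact (ih2 this).trans (Subgroup.card_quotient_dvd_card N)
    · exact (ih1 hN').trans (Subgroup.card_subgroup_dvd_card N)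

lemma PS.dvd (h : PS G) (hs : ¬ Group.IsSolvable G) {p : ℕ} (hp : p ∈ ({2, 3, 5} : Set ℕ)) :
    p ∣ Nat.card G := by
  refine Dvd.dvd.trans ?_ (h.card_dvd hs)
  rcases hp with rfl | rfl | rfl <;> norm_num

lemma PS.sol_of_not_dvd (h : PS G) {p : ℕ} (hp : p ∈ ({2, 3, 5} : Set ℕ))
    (hd : ¬ p ∣ Nat.card G) : Group.IsSolvable G := by
  by_contra hs
  exact hd (h.dvd hs hp)

lemma PS.simple (h : PS G) (hs : IsSimpleGroup G) : Group.IsSolvable G ∨ Nonempty (G ≃* A5) := by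
  unfold PS at h
  rename_i i
  induction h with
  | sol G i h => exact Or.inl h
  | alt G i h => exact Or.inr h
  | ext G i N hN h1 h2 ih1 ih2 =>
    rcases hN.eq_bot_or_eq_top with h | h
    · subst h
      have e : G ⧸ (⊥ : Subgroup G) ≃* G := QuotientGroup.quotientBot
      rcases ih2 e.isSimpleGroup with h | ⟨⟨h⟩⟩
      · exact Or.inl (Group.isSolvable_of_surjective (f := e.toMonoidHom) e.surjective)
      · exact Or.inr ⟨e.symm.trans h⟩
    · subst h
      have e : (⊤ : Subgroup G) ≃* G := Subgroup.topEquiv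
      rcases ih1 e.isSimpleGroup with h | ⟨⟨h⟩⟩
      · exact Or.inl (Group.isSolvable_of_surjective (f := e.toMonoidHom) e.surjective)
      · exact Or.inr ⟨e.symm.trans h⟩

lemma sol_quot_commutator : Group.IsSolvable (G ⧸ commutator G) :=
  (inferInstance : Group.IsSolvable (Abelianization G))

lemma not_sol_commutator (hs : ¬ Group.IsSolvable G) : ¬ Group.IsSolvable (commutator G) :=
  fun h => hs (sol_of_ext _ h sol_quot_commutator)

lemma PS.dvd_commutator (h : PS G) (hs : ¬ Group.IsSolvable G) {p : ℕ}
    (hp : p ∈ ({2, 3, 5} : Set ℕ)) : p ∣ Nat.card (commutator G) :=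
  (h.normal _).dvd (not_sol_commutator hs) hp

/-- solvable radical -/
structure IsRad (R : Subgroup G) : Prop where
  normal : R.Normal
  sol : Group.IsSolvable R
  max : ∀ J : Subgroup G, J.Normal → Group.IsSolvable J → J ≤ R

lemma sol_of_le {J K : Subgroup G} (h : J ≤ K) (hK : Group.IsSolvable K) : Group.IsSolvable J :=
  Group.isSolvable_of_isSolvable_injective (f := Subgroup.inclusion h)
    (Subgroup.inclusion_injective h)

lemma sol_comap (N : Subgroup G) [N.Normal] (hN : Group.IsSolvable N) (M : Subgroup (G ⧸ N))
    (hM : Group.IsSolvable M) : Group.IsSolvable (M.comap (QuotientGroup.mk' N)) := by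
  let f := (QuotientGroup.mk' N).subgroupComap M
  have hle : N ≤ M.comap (QuotientGroup.mk' N) := by
    intro x hx
    rw [Subgroup.mem_comap]
    have : QuotientGroup.mk' N x = 1 := (QuotientGroup.eq_one_iff x).2 hx
    rw [this]; exact one_mem _
  refine Group.isSolvable_of_ker_le_range (Subgroup.inclusion hle) f ?_
  rintro ⟨x, hx⟩ h
  have h1 : QuotientGroup.mk' N x = 1 := congrArg Subtype.val h
  exact ⟨⟨x, (QuotientGroup.eq_one_iff x).1 h1⟩, rfl⟩

lemma exists_rad [Finite G] : ∃ R : Subgroup G, IsRad R := by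
  have hfin : {R : Subgroup G | R.Normal ∧ Group.IsSolvable R}.Finite := Set.toFinite _
  obtain ⟨R, hR⟩ := hfin.exists_maximal ⟨⊥, inferInstance, inferInstance⟩
  refine ⟨R, hR.1.1, hR.1.2, fun J hJ hs => ?_⟩
  have hRn := hR.1.1
  have hRs := hR.1.2
  have : (J ⊔ R).Normal ∧ Group.IsSolvable ↥(J ⊔ R) := by
    refine ⟨inferInstance, ?_⟩
    have h1 : Group.IsSolvable (J.map (QuotientGroup.mk' R)) :=
      Group.isSolvable_of_surjective ((QuotientGroup.mk' R).subgroupMap_surjective J)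
    have := sol_comap R hRs _ h1
    rwa [Subgroup.comap_map_eq, QuotientGroup.ker_mk'] at this
  exact le_sup_left.trans (hR.2 this le_sup_right)

lemma IsRad.quot_trivial {R : Subgroup G} [R.Normal] (hR : IsRad R) (M : Subgroup (G ⧸ R))
    (hM : M.Normal) (hs : Group.IsSolvable M) : M = ⊥ := by
  have h1 := hR.max _ (hM.comap (QuotientGroup.mk' R)) (sol_comap R hR.sol M hs)
  rw [eq_bot_iff]
  intro x hx
  obtain ⟨y, rfl⟩ := QuotientGroup.mk'_surjective R x
  exact (QuotientGroup.eq_one_iff y).2 (h1 hx)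

end

section
variable {G : Type u} [Group G]

structure IsMinNormal (M : Subgroup G) : Prop where
  ne_bot : M ≠ ⊥
  normal : M.Normal
  min : ∀ K ≤ M, K.Normal → K = ⊥ ∨ K = M

structure ElemP (p : ℕ) (M : Subgroup G) : Prop where
  ne_bot : M ≠ ⊥
  normal : M.Normal
  comm : ∀ a ∈ M, ∀ b ∈ M, a * b = b * a
  exp : ∀ a ∈ M, a ^ p = 1

lemma exists_minNormal [Finite G] (K : Subgroup G) (hK : K.Normal) (h : K ≠ ⊥) :
    ∃ M ≤ K, IsMinNormal M := by
  have hfin : {R : Subgroup G | R.Normal ∧ R ≠ ⊥ ∧ R ≤ K}.Finite := Set.toFinite _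
  obtain ⟨M, hM⟩ := hfin.exists_minimal ⟨K, hK, h, le_rfl⟩
  refine ⟨M, hM.1.2.2, hM.1.2.1, hM.1.1, fun J hJ hn => ?_⟩
  by_cases hJ0 : J = ⊥
  · exact Or.inl hJ0
  · exact Or.inr (le_antisymm hJ (hM.2 ⟨hn, hJ0, hJ.trans hM.1.2.2⟩ hJ))

lemma chief [Finite G] (P : Subgroup G → Prop) (h0 : P ⊥) (h1 : ¬ P ⊤) :
    ∃ N : Subgroup G, ∃ _ : N.Normal, P N ∧ ∃ M : Subgroup (G ⧸ N), IsMinNormal M ∧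
      ¬ P (M.comap (QuotientGroup.mk' N)) := by
  have hfin : {R : Subgroup G | R.Normal ∧ P R}.Finite := Set.toFinite _
  obtain ⟨N, hN⟩ := hfin.exists_maximal ⟨⊥, inferInstance, h0⟩
  have hNn := hN.1.1
  refine ⟨N, hNn, hN.1.2, ?_⟩
  have hne : (⊤ : Subgroup (G ⧸ N)) ≠ ⊥ := by
    intro h
    apply h1
    have : N = ⊤ := by
      rw [eq_top_iff]
      intro x _
      have : (x : G ⧸ N) ∈ (⊥ : Subgroup (G ⧸ N)) := h ▸ Subgroup.mem_top _
      exact (QuotientGroup.eq_one_iff x).1 this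
    exact this ▸ hN.1.2
  obtain ⟨M, -, hM⟩ := exists_minNormal (⊤ : Subgroup (G ⧸ N)) inferInstance hne
  refine ⟨M, hM, fun hP => ?_⟩
  have h2 := hN.2 ⟨hM.normal.comap (QuotientGroup.mk' N), hP⟩ (by
    intro x hx
    have : QuotientGroup.mk' N x = 1 := (QuotientGroup.eq_one_iff x).2 hx
    rw [Subgroup.mem_comap, this]; exact one_mem _)
  apply hM.ne_bot
  rw [eq_bot_iff]
  intro x hx
  obtain ⟨y, rfl⟩ := QuotientGroup.mk'_surjective N x
  exact (QuotientGroup.eq_one_iff y).2 (h2 hx)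

lemma card_comap_mk [Finite G] (N : Subgroup G) [N.Normal] (M : Subgroup (G ⧸ N)) :
    Nat.card (M.comap (QuotientGroup.mk' N)) = Nat.card M * Nat.card N := by
  have h1 := Subgroup.card_mul_index (M.comap (QuotientGroup.mk' N))
  rw [Subgroup.index_comap_of_surjective _ (QuotientGroup.mk'_surjective N),
    Subgroup.card_eq_card_quotient_mul_card_subgroup N, ← Subgroup.card_mul_index M] at h1
  have h2 : M.index ≠ 0 := Subgroup.index_ne_zero_of_finite
  apply Nat.eq_of_mul_eq_mul_right (Nat.pos_of_ne_zero h2)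
  rw [h1]; ring

lemma IsMinNormal.elemP [Finite G] {M : Subgroup G} (hM : IsMinNormal M)
    (hs : Group.IsSolvable M) {p : ℕ} (hp : p.Prime) (hd : p ∣ Nat.card M) : ElemP p M := by
  have hMn := hM.normal
  have hcomm : ∀ a ∈ M, ∀ b ∈ M, a * b = b * a := by
    have h1 : ⁅M, M⁆ ≠ M := by
      intro h
      have hnt : Nontrivial M := (Subgroup.nontrivial_iff_ne_bot M).2 hM.ne_bot
      have h2 := Group.IsSolvable.commutator_lt_top_of_nontrivial M
      apply h2.ne
      apply Subgroup.map_injective M.subtype_injective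
      rw [commutator_def, Subgroup.map_commutator, ← MonoidHom.range_eq_map, M.range_subtype, h]
    rcases hM.min ⁅M, M⁆ (Subgroup.commutator_le_left M M) inferInstance with h | h
    · intro a ha b hb
      have := Subgroup.commutator_mem_commutator ha hb
      rw [h, Subgroup.mem_bot] at this
      exact commutatorElement_eq_one_iff_mul_comm.1 this
    · exact absurd h h1
  refine ⟨hM.ne_bot, hMn, hcomm, ?_⟩
  let K : Subgroup G :=
    { carrier := {a | a ∈ M ∧ a ^ p = 1}
      one_mem' := ⟨one_mem _, one_pow _⟩
      mul_mem' := by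
        rintro a b ⟨ha, ha'⟩ ⟨hb, hb'⟩
        refine ⟨mul_mem ha hb, ?_⟩
        have : Commute a b := hcomm a ha b hb
        rw [this.mul_pow, ha', hb', one_mul]
      inv_mem' := by
        rintro a ⟨ha, ha'⟩
        exact ⟨inv_mem ha, by rw [inv_pow, ha', inv_one]⟩ }
  have hK : K.Normal := by
    constructor
    rintro a ⟨ha, ha'⟩ g
    exact ⟨hMn.conj_mem a ha g, by rw [conj_pow, ha']; simp⟩
  rcases hM.min K (fun a ha => ha.1) hK with h | h
  · obtain ⟨g, hg⟩ := exists_ord (G := M) hp hd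
    have : (g : G) ∈ K := ⟨g.2, by
      rw [← hg, ← Subgroup.coe_pow, pow_orderOf_eq_one, Subgroup.coe_one]⟩
    rw [h, Subgroup.mem_bot] at this
    exact absurd (Subtype.ext this) (ne_one_of_ord hp hg)
  · intro a ha
    rw [← h] at ha
    exact ha.2

lemma chief_primes [Finite G] (X : Set ℕ) (hX : ∀ p ∈ X, p.Prime)
    (hd : ∃ p ∈ X, p ∣ Nat.card G) :
    ∃ N : Subgroup G, ∃ _ : N.Normal, (∀ p ∈ X, ¬ p ∣ Nat.card N) ∧
      ∃ M : Subgroup (G ⧸ N), IsMinNormal M ∧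
        ((¬ Group.IsSolvable M ∧ ∃ p ∈ X, p ∣ Nat.card M) ∨ ∃ p ∈ X, ElemP p M) := by
  obtain ⟨N, hN, h1, M, hM, h2⟩ := chief (G := G) (fun N => ∀ p ∈ X, ¬ p ∣ Nat.card N)
    (fun p hp h => by rw [Subgroup.card_bot] at h; exact (hX p hp).one_lt.ne' (Nat.dvd_one.1 h))
    (by
      obtain ⟨p, hp, hd⟩ := hd
      intro h
      exact h p hp (by rwa [Subgroup.card_top]))
  refine ⟨N, hN, h1, M, hM, ?_⟩
  push Not at h2
  obtain ⟨p, hp, h2⟩ := h2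
  rw [card_comap_mk] at h2
  have h3 := ((hX p hp).dvd_mul.1 h2).resolve_right (h1 p hp)
  by_cases hs : Group.IsSolvable M
  · exact Or.inr ⟨p, hp, hM.elemP hs (hX p hp) h3⟩
  · exact Or.inl ⟨hs, p, hp, h3⟩

lemma ElemP.exists_ord {p : ℕ} (hp : p.Prime) {M : Subgroup G} (h : ElemP p M) :
    ∃ v ∈ M, orderOf v = p := by
  obtain ⟨v, hv, hv1⟩ := M.bot_or_exists_ne_one.resolve_left h.ne_bot
  exact ⟨v, hv, orderOf_prime_of hp (h.exp v hv) hv1⟩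

lemma ElemP.isPGroup {p : ℕ} {M : Subgroup G} (h : ElemP p M) : IsPGroup p M := fun g =>
  ⟨1, Subtype.ext (by simpa using h.exp g g.2)⟩

lemma ElemP.sol {p : ℕ} {M : Subgroup G} (h : ElemP p M) : Group.IsSolvable M :=
  Group.isSolvable_of_comm (fun a b => Subtype.ext (h.comm a a.2 b b.2))

lemma ElemP.not_dvd [Finite G] {p q : ℕ} (hp : p.Prime) (hq : q.Prime) (hne : q ≠ p)
    {M : Subgroup G} (h : ElemP p M) : ¬ q ∣ Nat.card M := by
  intro hd
  have := Fact.mk hp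
  obtain ⟨n, hn⟩ := IsPGroup.iff_card.1 h.isPGroup
  rw [hn] at hd
  exact hne ((Nat.prime_dvd_prime_iff_eq hq hp).1 (hq.dvd_of_dvd_pow hd))

lemma ElemP.dvd [Finite G] {p : ℕ} (hp : p.Prime) {M : Subgroup G} (h : ElemP p M) :
    p ∣ Nat.card M := by
  obtain ⟨v, hv, hv'⟩ := h.exists_ord hp
  exact dvd_card_of_mem hv hv'

lemma exists_rep_aux0 {p : ℕ} {W : Type u} [AddCommGroup W] [Module (ZMod p) W]
    (c : G → W →+ W) (h1 : ∀ w, c 1 w = w) (h2 : ∀ g h w, c (g * h) w = c g (c h w)) :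
    ∃ (ρ : G →* Module.End (ZMod p) W), ∀ g w, ρ g w = c g w := by
  refine ⟨{ toFun := fun g => (c g).toZModLinearMap p, map_one' := ?_, map_mul' := ?_ }, ?_⟩
  · exact LinearMap.ext fun w => h1 w
  · intro g h
    exact LinearMap.ext fun w => h2 g h w
  · intro g w
    rfl

lemma exists_rep_aux {p : ℕ} {C : Type u} [CommGroup C] (hC : ∀ x : C, x ^ p = 1)
    (c : G →* MulAut C) :
    ∃ (W : Type u) (_ : AddCommGroup W) (_ : Module (ZMod p) W)
      (ρ : G →* Module.End (ZMod p) W) (e : W ≃ C), e 0 = 1 ∧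
      (∀ w w', e (w + w') = e w * e w') ∧ ∀ g w, e (ρ g w) = c g (e w) := by
  let i1 : AddCommGroup (Additive C) := inferInstance
  let i2 : @Module (ZMod p) (Additive C) _ i1.toAddCommMonoid :=
    AddCommGroup.zmodModule (n := p) (by
      intro x
      exact congrArg Additive.ofMul (hC (Additive.toMul x)))
  obtain ⟨ρ, hρ⟩ := @exists_rep_aux0 G _ p (Additive C) i1 i2
    (fun g => MonoidHom.toAdditive (c g).toMonoidHom)
    (fun w => by rw [map_one]; rfl) (fun g h w => by simp only [map_mul]; rfl)
  exact ⟨Additive C, i1, i2, ρ, Additive.toMul, rfl, fun _ _ => rfl, fun g w => by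
    rw [hρ]; rfl⟩

/-- conjugation representation, bundled existentially -/
lemma exists_rep {p : ℕ} {V : Subgroup G} (hV : ElemP p V) :
    ∃ (W : Type u) (_ : AddCommGroup W) (_ : Module (ZMod p) W)
      (ρ : G →* Module.End (ZMod p) W) (e : W → G), Function.Injective e ∧ (∀ w, e w ∈ V) ∧
      (∀ v ∈ V, ∃ w, e w = v) ∧ e 0 = 1 ∧ (∀ w w', e (w + w') = e w * e w') ∧
      ∀ g w, e (ρ g w) = g * e w * g⁻¹ := by
  have := hV.normal
  let _ : CommGroup V := { (inferInstance : Group V) with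
    mul_comm := fun a b => Subtype.ext (hV.comm a a.2 b b.2) }
  obtain ⟨W, i1, i2, ρ, e, h0, hadd, hρ⟩ := exists_rep_aux (p := p) (C := V)
    (fun x => Subtype.ext (hV.exp _ x.2)) (MulAut.conjNormal : G →* MulAut V)
  exact ⟨W, i1, i2, ρ, fun w => (e w : G), fun a b h => e.injective (Subtype.ext h),
    fun w => (e w).2, fun v hv => ⟨e.symm ⟨v, hv⟩, by simp⟩, congrArg Subtype.val h0,
    fun w w' => congrArg Subtype.val (hadd w w'), fun g w => by
      show ((e (ρ g w) : V) : G) = _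
      rw [hρ]; exact MulAut.conjNormal_apply g (e w)⟩

lemma sum_eq_zero_of_fix {p q : ℕ} (hp : p.Prime) (hq : q.Prime) (hne : p ≠ q)
    {K W : Type*} [Field K] [AddCommGroup W] [Module K W] (ρ : G →* Module.End K W)
    (e : W → G) (he : Function.Injective e) (h0 : e 0 = 1) (hep : ∀ w, e w ^ p = 1)
    (hρ : ∀ g w, e (ρ g w) = g * e w * g⁻¹) (hn : ¬ HasOrd G (p * q)) {h : G}
    (hh : orderOf h = q) : ∑ i ∈ Finset.range q, ρ h ^ i = 0 := by
  refine LinearMap.ext fun w => ?_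
  rw [LinearMap.zero_apply]
  set u := (∑ i ∈ Finset.range q, ρ h ^ i) w with hu
  have hfix : ρ h u = u := by
    have h1 : ρ h * (∑ i ∈ Finset.range q, ρ h ^ i) = ∑ i ∈ Finset.range q, ρ h ^ i := by
      have h2 := mul_geom_sum (ρ h) q
      rw [← map_pow, ← hh, pow_orderOf_eq_one, map_one, sub_self, hh, sub_mul, one_mul,
        sub_eq_zero] at h2
      exact h2
    rw [hu, ← Module.End.mul_apply, h1]
  by_contra hne0
  apply hn
  have h1 : e u ≠ 1 := fun h => hne0 (he (by rw [h, h0]))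
  refine HasOrd.of_commute hp hq hne (orderOf_prime_of hp (hep u) h1) hh ?_
  have := hρ h u
  rw [hfix] at this
  rw [Commute, SemiconjBy]
  conv_lhs => rw [this]
  group
end

section ring
variable {G A : Type*} [Group G] [Ring A]

lemma geom_sum_group (ρ : G →* A) (a : G) (n : ℕ) :
    ∑ i ∈ Finset.range n, ρ a ^ i = ∑ i ∈ Finset.range n, ρ (a ^ i) := by
  simp

lemma rank_two_zero (ρ : G →* A) {a b : G} {q : ℕ} (hq : q.Prime) (hab : Commute a b)
    (ha : orderOf a = q) (hb : orderOf b = q) (hn : b ∉ Subgroup.zpowers a)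
    (h : ∀ g : G, orderOf g = q → ∑ i ∈ Finset.range q, ρ g ^ i = 0) : (q : A) = 0 := by
  have haq : a ^ q = 1 := by rw [← ha, pow_orderOf_eq_one]
  have hbq : b ^ q = 1 := by rw [← hb, pow_orderOf_eq_one]
  have h1 : ∀ i, ∑ j ∈ Finset.range q, ρ (a ^ i * b) ^ j = 0 := by
    intro i
    apply h
    apply orderOf_prime_of hq
    · rw [(hab.pow_left i).mul_pow, ← pow_mul, mul_comm, pow_mul, haq, hbq, one_pow, one_mul]
    · intro h1
      apply hn
      rw [← inv_eq_of_mul_eq_one_right h1]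
      exact inv_mem (pow_mem (Subgroup.mem_zpowers a) i)
  have h2 : ∑ i ∈ Finset.range q, ∑ j ∈ Finset.range q, ρ (a ^ i * b) ^ j = 0 :=
    Finset.sum_eq_zero (fun i _ => h1 i)
  rw [Finset.sum_comm] at h2
  have h3 : ∀ j ∈ Finset.range q, ∑ i ∈ Finset.range q, ρ (a ^ i * b) ^ j =
      if j = 0 then (q : A) else 0 := by
    intro j hj
    split_ifs with h0
    · subst h0; simp
    · have : ∀ i, ρ (a ^ i * b) ^ j = ρ (a ^ j) ^ i * ρ (b ^ j) := by
        intro i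
        rw [← map_pow, ← map_pow, ← map_mul, (hab.pow_left i).mul_pow, ← pow_mul, ← pow_mul,
          mul_comm i j]
      simp_rw [this]
      rw [← Finset.sum_mul, h, zero_mul]
      apply orderOf_prime_of hq
      · rw [← pow_mul, mul_comm, pow_mul, haq, one_pow]
      · intro h1
        have h2 := orderOf_dvd_of_pow_eq_one h1
        rw [ha] at h2
        exact absurd (Nat.le_of_dvd (Nat.pos_of_ne_zero h0) h2) (by simpa using hj)
  rw [Finset.sum_congr rfl h3, Finset.sum_ite_eq' ] at h2
  simpa [hq.pos] using h2

lemma zero_of_coprime {m n : ℕ} (hc : Nat.Coprime m n) (hm : (m : A) = 0) {x : A}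
    (hx : (n : A) * x = 0) : x = 0 := by
  have h1 := Nat.gcd_eq_gcd_ab m n
  rw [hc] at h1
  have h2 : (1 : A) = (m : A) * (m.gcdA n : A) + (n.gcdA m * 0 : A) + (n : A) * (m.gcdB n : A) := by
    have := congrArg (Int.cast : ℤ → A) h1
    push_cast at this
    rw [mul_zero, add_zero]; exact this
  rw [hm, zero_mul, mul_zero, add_zero, zero_add, (Nat.cast_commute n _).eq] at h2
  rw [← one_mul x, h2, mul_assoc, hx, mul_zero]

lemma partition_lemma (ρ : G →* A) (S : Subgroup G) [Finite S] {h : G} {l : ℕ} (hl : l.Prime)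
    (hh : h ^ l = 1) (hS : ∀ s ∈ S, h * s * h⁻¹ ∈ S) (hC : ∀ s ∈ S, h * s * h⁻¹ = s → s = 1)
    (hsum : ∑ i ∈ Finset.range l, ρ h ^ i = 0) {s : G} (hs : s ∈ S) :
    (Nat.card S : A) * (ρ s - 1) = 0 := by
  have := Fintype.ofFinite S
  have hSi : ∀ i : ℕ, ∀ s ∈ S, h ^ i * s * (h ^ i)⁻¹ ∈ S := by
    intro i
    induction i with
    | zero => intro s hs; simpa using hs
    | succ i ih =>
      intro s hs
      have := hS _ (ih s hs)
      rw [pow_succ']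
      convert this using 1
      group
  set T : A := ∑ s : S, ρ s with hT
  have key : ∀ i ∈ Finset.range l, ∑ s : S, ρ (s * h ^ i * (s : G)⁻¹) =
      if i = 0 then (Nat.card S : A) - T + T else T * ρ h ^ i := by
    intro i hi
    split_ifs with h0
    · subst h0
      simp [Nat.card_eq_fintype_card]
    · have hcop : Nat.Coprime i l := by
        refine ((Nat.Prime.coprime_iff_not_dvd hl).2 fun hd => ?_).symm
        exact absurd (Nat.le_of_dvd (Nat.pos_of_ne_zero h0) hd) (by simpa using hi)
      let φ : S → S := fun s => s * ⟨_, hSi i _ (s⁻¹).2⟩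
      have hφ : ∀ s : S, ((φ s : S) : G) = s * (h ^ i * (s : G)⁻¹ * (h ^ i)⁻¹) := fun s => rfl
      have hinj : Function.Injective φ := by
        intro s t hst
        have h1 := congrArg Subtype.val hst
        rw [hφ, hφ] at h1
        have h2 : h ^ i * ((t : G)⁻¹ * s) * (h ^ i)⁻¹ = (t : G)⁻¹ * s := by
          have : (t : G)⁻¹ * s = (t : G)⁻¹ * (s * (h ^ i * (s : G)⁻¹ * (h ^ i)⁻¹)) *
            (h ^ i * (s : G)⁻¹ * (h ^ i)⁻¹)⁻¹ := by group
          conv_rhs => rw [this, h1]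
          group
        have h3 : Commute ((t : G)⁻¹ * s) (h ^ i) := by
          rw [mul_inv_eq_iff_eq_mul] at h2
          exact h2.symm
        obtain ⟨m, hm⟩ := Nat.exists_mul_mod_eq_one_of_coprime hcop hl.one_lt
        have h4 : h = (h ^ i) ^ m := by
          rw [← pow_mul, ← Nat.div_add_mod (i * m) l, hm.2, pow_add, pow_mul, hh, one_pow, one_mul,
            pow_one]
        have h5 : Commute ((t : G)⁻¹ * s) h := by rw [h4]; exact h3.pow_right m
        have h6 := hC _ (mul_mem (inv_mem t.2) s.2) (by rw [← h5.eq]; group)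
        exact Subtype.ext (inv_mul_eq_one.1 h6).symm
      have hbij : Function.Bijective φ := Finite.injective_iff_bijective.1 hinj
      rw [hT, ← hbij.sum_comp (fun s : S => ρ s), Finset.sum_mul]
      refine Finset.sum_congr rfl fun s _ => ?_
      rw [hφ, ← map_pow, ← map_mul]
      congr 1
      group
  have h1 : ∑ i ∈ Finset.range l, ∑ s : S, ρ (s * h ^ i * (s : G)⁻¹) = 0 := by
    rw [Finset.sum_comm]
    refine Finset.sum_eq_zero fun s _ => ?_
    have : ∀ i, ρ (s * h ^ i * (s : G)⁻¹) = ρ s * ρ h ^ i * ρ ((s : G)⁻¹) := by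
      intro i; simp
    simp_rw [this]
    rw [← Finset.sum_mul, ← Finset.mul_sum, hsum, mul_zero, zero_mul]
  have h2 : ∑ i ∈ Finset.range l, (if i = 0 then (Nat.card S : A) - T + T else T * ρ h ^ i) =
      (Nat.card S : A) - T := by
    have : ∀ i ∈ Finset.range l, (if i = 0 then (Nat.card S : A) - T + T else T * ρ h ^ i) =
      (if i = 0 then (Nat.card S : A) - T else 0) + T * ρ h ^ i := by
      intro i _
      split_ifs with h0
      · subst h0; simp
      · simp
    rw [Finset.sum_congr rfl this, Finset.sum_add_distrib, ← Finset.mul_sum, hsum, mul_zero,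
      Finset.sum_ite_eq' ]
    simp [hl.pos]
  rw [Finset.sum_congr rfl key, h2] at h1
  have h3 : (Nat.card S : A) = T := sub_eq_zero.1 h1
  have h4 : ρ s * T = T := by
    rw [hT, Finset.mul_sum]
    have := Equiv.sum_comp (Equiv.mulLeft (⟨s, hs⟩ : S)) (fun s : S => ρ s)
    rw [← this]
    refine Finset.sum_congr rfl fun t _ => ?_
    simp
  rw [mul_sub, mul_one, (Nat.cast_commute _ _).eq]
  conv_lhs => rw [h3]
  rw [h4, sub_self]

end ring

section
variable {G : Type u} [Group G]

lemma ElemP.rank1 [Finite G] {p q : ℕ} (hp : p.Prime) (hq : q.Prime) (hne : p ≠ q)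
    {V : Subgroup G} (hV : ElemP p V) (hn : ¬ HasOrd G (p * q)) : Rank1 q G := by
  have := Fact.mk hp
  obtain ⟨W, _, _, ρ, e, he, heV, hVe, h0, hadd, hρ⟩ := exists_rep hV
  intro a b ha hb hab
  by_contra hnm
  have h1 := rank_two_zero ρ hq hab ha hb hnm (fun g hg =>
    sum_eq_zero_of_fix hp hq hne ρ e he h0 (fun w => hV.exp _ (heV w)) hρ hn hg)
  have h2 : (p : Module.End (ZMod p) W) = 0 := by
    ext w
    simp [← Nat.cast_smul_eq_nsmul (ZMod p)]
  have h3 : (1 : Module.End (ZMod p) W) = 0 :=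
    zero_of_coprime ((Nat.coprime_primes hp hq).2 hne) h2 (by rw [h1, zero_mul])
  obtain ⟨v, hv, hv'⟩ := hV.exists_ord hp
  obtain ⟨w, rfl⟩ := hVe v hv
  have : w = 0 := by
    have := congrArg (fun f => f w) h3
    simpa using this
  rw [this, h0] at hv'
  exact ne_one_of_ord hp hv' rfl

lemma ElemP.partition [Finite G] {p l : ℕ} (hp : p.Prime) (hl : l.Prime) (hne : p ≠ l)
    {V : Subgroup G} (hV : ElemP p V) (hn : ¬ HasOrd G (p * l)) (S : Subgroup G)
    (hSp : ¬ p ∣ Nat.card S) {h : G} (hh : orderOf h = l)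
    (hS : ∀ s ∈ S, h * s * h⁻¹ ∈ S) (hC : ∀ s ∈ S, h * s * h⁻¹ = s → s = 1) {s v : G}
    (hs : s ∈ S) (hv : v ∈ V) : Commute s v := by
  have := Fact.mk hp
  obtain ⟨W, _, _, ρ, e, he, heV, hVe, h0, hadd, hρ⟩ := exists_rep hV
  have h1 := partition_lemma ρ S hl (by rw [← hh, pow_orderOf_eq_one]) hS hC
    (sum_eq_zero_of_fix hp hl hne ρ e he h0 (fun w => hV.exp _ (heV w)) hρ hn hh) hs
  have h2 : (p : Module.End (ZMod p) W) = 0 := by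
    ext w
    simp [← Nat.cast_smul_eq_nsmul (ZMod p)]
  have h3 := zero_of_coprime ((Nat.Prime.coprime_iff_not_dvd hp).2 hSp) h2 h1
  obtain ⟨w, rfl⟩ := hVe v hv
  have h4 := hρ s w
  rw [sub_eq_zero.1 h3, Module.End.one_apply, eq_mul_inv_iff_mul_eq] at h4
  exact h4.symm

end

section
open Subgroup
variable {G : Type u} [Group G]

lemma exists_central_ord [Finite G] {p : ℕ} (hp : p.Prime) {P : Subgroup G} (hP : IsPGroup p P)
    (hne : P ≠ ⊥) : ∃ z ∈ P, orderOf z = p ∧ ∀ x ∈ P, Commute x z := by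
  have := Fact.mk hp
  have hnt : Nontrivial P := (nontrivial_iff_ne_bot P).2 hne
  have hc := hP.center_nontrivial
  obtain ⟨k, hk0, hk⟩ := (hP.to_subgroup (center P)).nontrivial_iff_card.1 hc
  have hd : p ∣ Nat.card (center P) := by rw [hk]; exact dvd_pow_self p (by omega)
  obtain ⟨z, hz⟩ := exists_ord hp hd
  refine ⟨z.1.1, z.1.2, ?_, fun x hx => ?_⟩
  · rw [orderOf_coe, orderOf_coe, hz]
  · have := mem_center_iff.1 z.2 ⟨x, hx⟩
    exact congrArg Subtype.val this

lemma exists_unique_ord [Finite G] {p : ℕ} (hp : p.Prime) (hr : Rank1 p G) {P : Subgroup G}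
    (hP : IsPGroup p P) (hne : P ≠ ⊥) :
    ∃ z ∈ P, orderOf z = p ∧ ∀ x ∈ P, orderOf x = p → x ∈ zpowers z := by
  obtain ⟨z, hz, ho, hc⟩ := exists_central_ord hp hP hne
  exact ⟨z, hz, ho, fun x hx hxo => hr z x ho hxo (hc x hx).symm⟩

lemma mem_zpowers_symm [Finite G] {p : ℕ} (hp : p.Prime) {x z : G} (hx : orderOf x = p)
    (hz : orderOf z = p) (h : x ∈ zpowers z) : zpowers x = zpowers z :=
  eq_of_le_of_card_ge (zpowers_le.2 h) (by rw [Nat.card_zpowers, Nat.card_zpowers, hx, hz])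

lemma mem_normalizer_of_conj [Finite G] {K : Subgroup G} {n : G}
    (h : ∀ k ∈ K, n * k * n⁻¹ ∈ K) : n ∈ normalizer (K : Set G) := by
  rw [mem_normalizer_iff_map_conj_eq]
  apply eq_of_le_of_card_ge
  · rintro _ ⟨k, hk, rfl⟩
    exact h k hk
  · exact (Nat.card_congr (K.equivMapOfInjective _ (MulAut.conj n).injective).toEquiv).le

lemma mem_normalizer_zpowers [Finite G] {z n : G} (h : n * z * n⁻¹ ∈ zpowers z) :
    n ∈ normalizer (zpowers z : Set G) := by
  apply mem_normalizer_of_conj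
  rintro _ ⟨k, rfl⟩
  show n * z ^ k * n⁻¹ ∈ _
  rw [← conj_zpow]
  exact zpow_mem h k

lemma fratt0 [Finite G] {p : ℕ} (hp : p.Prime) (hr : Rank1 p G) (U : Subgroup G) [U.Normal]
    (hd : p ∣ Nat.card U) :
    ∃ z ∈ U, orderOf z = p ∧ normalizer (zpowers z : Set G) ⊔ U = ⊤ := by
  have := Fact.mk hp
  obtain ⟨P⟩ := (inferInstance : Nonempty (Sylow p U))
  have hPp : IsPGroup p ((P : Subgroup U).map U.subtype) := P.isPGroup'.map _
  have hne : (P : Subgroup U).map U.subtype ≠ ⊥ := by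
    rw [Ne, map_eq_bot_iff_of_injective _ U.subtype_injective]
    intro h
    exact P.ne_bot_of_dvd_card hd h
  obtain ⟨z, hz, ho, hc⟩ := exists_unique_ord hp hr hPp hne
  refine ⟨z, map_subtype_le _ hz, ho, ?_⟩
  rw [eq_top_iff, ← P.normalizer_sup_eq_top]
  refine sup_le_sup_right ?_ _
  intro n hn
  apply mem_normalizer_zpowers
  apply hc
  · exact (mem_normalizer_iff.1 hn z).1 hz
  · rw [← ho]; exact orderOf_injective (MulAut.conj n).toMonoidHom (MulAut.conj n).injective z

lemma mulAut_comm {C : Type*} [Group C] [IsCyclic C] (a b : MulAut C) : a * b = b * a := by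
  apply (IsCyclic.mulAutMulEquiv C).injective
  rw [map_mul, map_mul, mul_comm]

lemma centralize_of_ker {z : G} (n : normalizer (zpowers z : Set G))
    (h : (zpowers z).normalizerMonoidHom n = 1) : Commute (n : G) z := by
  have : n ∈ (zpowers z).normalizerMonoidHom.ker := h
  rw [normalizerMonoidHom_ker, mem_subgroupOf, mem_centralizer_iff] at this
  exact (this z (mem_zpowers z)).symm

lemma surj_of_sup (N U : Subgroup G) [U.Normal] (h : N ⊔ U = ⊤) :
    Function.Surjective ((QuotientGroup.mk' U).comp N.subtype) := by
  intro y
  obtain ⟨g, rfl⟩ := QuotientGroup.mk'_surjective U y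
  have hg : g ∈ N ⊔ U := h ▸ mem_top g
  rw [← SetLike.mem_coe, mul_normal] at hg
  obtain ⟨n, hn, v, hv, rfl⟩ := hg
  refine ⟨⟨n, hn⟩, ?_⟩
  have : QuotientGroup.mk' U v = 1 := (QuotientGroup.eq_one_iff v).2 hv
  show QuotientGroup.mk' U n = QuotientGroup.mk' U (n * v)
  rw [map_mul, this, mul_one]

/-- power of `g` of order `q`, given a map -/
lemma exists_pow_ord {H : Type*} [Group H] [Finite G] (f : G →* H) {g : G} {q : ℕ}
    (h : orderOf (f g) = q) : ∃ m, orderOf (g ^ m) = q := by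
  have hd : q ∣ orderOf g := h ▸ orderOf_map_dvd f g
  obtain ⟨m, hm⟩ := hd
  have h0 := orderOf_pos g
  have hm0 : m ≠ 0 := by rintro rfl; omega
  refine ⟨m, ?_⟩
  rw [orderOf_pow_of_dvd hm0 (hm ▸ dvd_mul_left m q), hm]
  exact Nat.mul_div_cancel _ (Nat.pos_of_ne_zero hm0)

lemma frattini1 [Finite G] {p q : ℕ} (hp : p.Prime) (hq : q.Prime) (hne : p ≠ q)
    (hr : Rank1 p G) (U : Subgroup G) [U.Normal] (hd : p ∣ Nat.card U)
    (hd' : q ∣ Nat.card (commutator (G ⧸ U))) : HasOrd G (p * q) := by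
  obtain ⟨z, hz, ho, hN⟩ := fratt0 hp hr U hd
  set N : Subgroup G := normalizer (zpowers z : Set G) with hNdef
  set f := (QuotientGroup.mk' U).comp N.subtype with hf
  have hfs : Function.Surjective f := surj_of_sup N U hN
  obtain ⟨y, hy⟩ := exists_ord hq hd'
  have hc : (commutator N).map f = commutator (G ⧸ U) := by
    rw [_root_.commutator_def, map_commutator, ← MonoidHom.range_eq_map, MonoidHom.range_eq_top.2 hfs,
      _root_.commutator_def]
  have hy2 : (y : G ⧸ U) ∈ (commutator N).map f := by rw [hc]; exact y.2
  obtain ⟨n, hn, hny⟩ := hy2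
  have hker : (zpowers z).normalizerMonoidHom n = 1 := by
    have : commutator N ≤ (zpowers z).normalizerMonoidHom.ker := by
      rw [_root_.commutator_def, commutator_le]
      intro a _ b _
      rw [MonoidHom.mem_ker, map_commutatorElement, commutatorElement_eq_one_iff_mul_comm]
      exact mulAut_comm _ _
    exact this hn
  have hcz := centralize_of_ker n hker
  have : orderOf (f n) = q := by rw [hny, orderOf_coe, hy]
  obtain ⟨m, hm⟩ := exists_pow_ord f this
  rw [← orderOf_coe, coe_pow] at hm
  exact HasOrd.of_commute hp hq hne ho hm (hcz.pow_left m).symm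

lemma frattini_norm [Finite G] {q : ℕ} (hq : q.Prime) (U N : Subgroup G) [U.Normal]
    (h : N ⊔ U = ⊤) (hd : q ∣ Nat.card (G ⧸ U)) : ∃ n ∈ N, orderOf n = q := by
  obtain ⟨y, hy⟩ := exists_ord hq hd
  obtain ⟨n, hn⟩ := surj_of_sup N U h y
  obtain ⟨m, hm⟩ := exists_pow_ord _ (hn.symm ▸ hy)
  exact ⟨_, (n ^ m).2, by rw [orderOf_coe, hm]⟩

lemma frattini2 [Finite G] {p q : ℕ} (hp : p.Prime) (hq : q.Prime) (hne : p ≠ q)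
    (hr : Rank1 p G) (U : Subgroup G) [U.Normal] (hd : p ∣ Nat.card U)
    (hd' : q ∣ Nat.card (G ⧸ U)) (hqp : ¬ q ∣ p - 1) : HasOrd G (p * q) := by
  obtain ⟨z, hz, ho, hN⟩ := fratt0 hp hr U hd
  obtain ⟨n, hn, hno⟩ := frattini_norm hq U _ hN hd'
  refine HasOrd.of_commute hp hq hne ho hno ?_
  refine (centralize_of_ker ⟨n, hn⟩ ?_).symm
  by_contra h1
  apply hqp
  have h2 := orderOf_map_prime hq (g := (⟨n, hn⟩ : normalizer (zpowers z : Set G)))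
    (by rwa [orderOf_mk]) _ h1
  have h3 : Nat.card (MulAut (zpowers z)) = p - 1 := by
    rw [IsCyclic.card_mulAut, Nat.card_zpowers, ho, Nat.totient_prime hp]
  rw [← h2, ← h3]
  exact orderOf_dvd_natCard _

lemma conj_rank1 [Finite G] {p : ℕ} (hp : p.Prime) (hr : Rank1 p G) {x x' : G}
    (hx : orderOf x = p) (hx' : orderOf x' = p) : ∃ g, g * x * g⁻¹ ∈ zpowers x' := by
  have := Fact.mk hp
  have hz : ∀ y : G, orderOf y = p → IsPGroup p (zpowers y) := fun y hy =>
    IsPGroup.of_card (n := 1) (by rw [Nat.card_zpowers, hy, pow_one])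
  obtain ⟨P, hP⟩ := (hz x hx).exists_le_sylow
  obtain ⟨Q, hQ⟩ := (hz x' hx').exists_le_sylow
  have hne : (Q : Subgroup G) ≠ ⊥ := by
    intro h
    rw [h] at hQ
    exact ne_one_of_ord hp hx' (mem_bot.1 (hQ (mem_zpowers x')))
  obtain ⟨z, hz, ho, hc⟩ := exists_unique_ord hp hr Q.isPGroup' hne
  have e := mem_zpowers_symm hp hx' ho (hc x' (hQ (mem_zpowers x')) hx')
  obtain ⟨g, hg⟩ := MulAction.exists_smul_eq G P Q
  refine ⟨g, ?_⟩
  rw [e]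
  apply hc
  · rw [← hg]
    exact ⟨x, hP (mem_zpowers x), rfl⟩
  · rw [← hx]; exact orderOf_injective (MulAut.conj g).toMonoidHom (MulAut.conj g).injective x

lemma card_quot_dvd [Finite G] {q : ℕ} (hq : q.Prime) (U : Subgroup G)
    (hd : q ∣ Nat.card G) (hU : ¬ q ∣ Nat.card U) : q ∣ Nat.card (G ⧸ U) := by
  rw [card_eq_card_quotient_mul_card_subgroup U] at hd
  exact (hq.dvd_mul.1 hd).resolve_right hU

lemma ord_abelianization [Finite G] {p q : ℕ} (hp : p.Prime) (hq : q.Prime) (hne : p ≠ q)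
    (hpd : p ∣ Nat.card G) (hqd : q ∣ Nat.card G) (hp' : ¬ p ∣ Nat.card (commutator G))
    (hq' : ¬ q ∣ Nat.card (commutator G)) : HasOrd G (p * q) := by
  obtain ⟨a, ha⟩ := exists_ord hp (card_quot_dvd hp _ hpd hp')
  obtain ⟨b, hb⟩ := exists_ord hq (card_quot_dvd hq _ hqd hq')
  have h : HasOrd (G ⧸ commutator G) (p * q) :=
    HasOrd.of_commute hp hq hne ha hb (mul_comm (G := Abelianization G) a b)
  exact h.of_quot

lemma map_commutator_quot (U : Subgroup G) [U.Normal] :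
    (commutator G).map (QuotientGroup.mk' U) = commutator (G ⧸ U) := by
  rw [_root_.commutator_def, map_commutator, ← MonoidHom.range_eq_map,
    MonoidHom.range_eq_top.2 (QuotientGroup.mk'_surjective U), _root_.commutator_def]

lemma dvd_commutator_quot [Finite G] {q : ℕ} (hq : q.Prime) (U : Subgroup G) [U.Normal]
    (hU : ¬ q ∣ Nat.card U) (hd : q ∣ Nat.card (commutator G)) :
    q ∣ Nat.card (commutator (G ⧸ U)) := by
  obtain ⟨x, hx⟩ := exists_ord hq hd
  rw [← orderOf_coe] at hx
  have h1 : orderOf (QuotientGroup.mk' U (x : G)) = q := by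
    apply orderOf_map_prime hq hx
    intro h
    exact hU (dvd_card_of_mem ((QuotientGroup.eq_one_iff _).1 h) hx)
  refine dvd_card_of_mem ?_ h1
  rw [← map_commutator_quot]
  exact ⟨x, x.2, rfl⟩

lemma dvd_commutator_of_quot [Finite G] {q : ℕ} (U : Subgroup G) [U.Normal]
    (hd : q ∣ Nat.card (commutator (G ⧸ U))) : q ∣ Nat.card (commutator G) := by
  rw [← map_commutator_quot] at hd
  exact hd.trans (card_dvd_of_surjective _
    (((QuotientGroup.mk' U).subgroupMap_surjective (commutator G))))

end

def v1 : A5 := ⟨Equiv.swap 0 1 * Equiv.swap 2 3, by rw [Equiv.Perm.mem_alternatingGroup]; decide⟩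
def v2 : A5 := ⟨Equiv.swap 0 2 * Equiv.swap 1 3, by rw [Equiv.Perm.mem_alternatingGroup]; decide⟩
def c3 : A5 := ⟨Equiv.swap 0 1 * Equiv.swap 1 2, by rw [Equiv.Perm.mem_alternatingGroup]; decide⟩

lemma v1_ne : v1 ≠ 1 := by decide
lemma v2_ne : v2 ≠ 1 := by decide
lemma v12_ne : v1 ≠ v2 := by decide
lemma v1_sq : v1 * v1 = 1 := by decide
lemma v2_sq : v2 * v2 = 1 := by decide
lemma v12_comm : v1 * v2 = v2 * v1 := by decide
lemma c3_cube : c3 ^ 3 = 1 := by decide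
lemma c3_ne : c3 ≠ 1 := by decide
lemma c3_v1 : c3 * v1 * c3⁻¹ = v1 * v2 ∨ c3 * v1 * c3⁻¹ = v2 := by decide

def V4 : Subgroup A5 where
  carrier := {x | x = 1 ∨ x = v1 ∨ x = v2 ∨ x = v1 * v2}
  one_mem' := Or.inl rfl
  mul_mem' := by
    rintro a b (rfl | rfl | rfl | rfl) (rfl | rfl | rfl | rfl) <;>
      simp only [Set.mem_ofPred_eq] <;> decide
  inv_mem' := by
    rintro a (rfl | rfl | rfl | rfl) <;> simp only [Set.mem_ofPred_eq] <;> decide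

lemma mem_V4 {x : A5} : x ∈ V4 ↔ x = 1 ∨ x = v1 ∨ x = v2 ∨ x = v1 * v2 := Iff.rfl

lemma V4_card : Nat.card V4 = 4 := by
  have : (V4 : Set A5) = (({1, v1, v2, v1 * v2} : Finset A5) : Set A5) := by
    ext x
    simp only [SetLike.mem_coe, mem_V4, Finset.coe_insert, Finset.coe_singleton,
      Set.mem_insert_iff, Set.mem_singleton_iff]
  have h2 : Nat.card V4 = Set.ncard (V4 : Set A5) := rfl
  rw [h2, this, Set.ncard_coe_finset]
  decide

lemma c3_V4 : ∀ x ∈ V4, c3 * x * c3⁻¹ ∈ V4 := by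
  rintro a (rfl | rfl | rfl | rfl) <;> rw [mem_V4] <;> decide

lemma orderOf_c3 : orderOf c3 = 3 := orderOf_prime_of Nat.prime_three c3_cube c3_ne

lemma card_mulAut_A5 : Nat.card (MulAut A5) ∣ 120 := by
  have := Fact.mk Nat.prime_two
  have hf : Nat.factorization 60 2 = 2 := by
    have h1 : (2 : ℕ).Prime := Nat.prime_two
    rw [Nat.factorization_def _ h1]
    rw [show 60 = 2 ^ 2 * 15 by norm_num, padicValNat.mul (by norm_num) (by norm_num),
      padicValNat.prime_pow, padicValNat.eq_zero_of_not_dvd (by norm_num)]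
  let P : Sylow 2 A5 := Sylow.ofCard V4 (by rw [V4_card, A5_card, hf]; norm_num)
  have hP : (P : Subgroup A5) = V4 := rfl
  have hidx : Nat.card (Sylow 2 A5) ∣ 5 := by
    have h1 := P.card_eq_index_normalizer
    have h2 : 12 ∣ Nat.card (Subgroup.normalizer (P : Set A5)) := by
      have h3 : 4 ∣ Nat.card (Subgroup.normalizer (P : Set A5)) := by
        rw [← V4_card, ← hP]
        exact Subgroup.card_dvd_of_le Subgroup.le_normalizer
      have h4 : 3 ∣ Nat.card (Subgroup.normalizer (P : Set A5)) := by
        refine dvd_card_of_mem (g := c3) ?_ orderOf_c3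
        exact mem_normalizer_of_conj (K := V4) c3_V4
      exact Nat.Coprime.mul_dvd_of_dvd_of_dvd (by norm_num) h3 h4
    have h5 := Subgroup.card_mul_index (Subgroup.normalizer (P : Set A5))
    rw [A5_card] at h5
    rw [h1]
    obtain ⟨k, hk⟩ := h2
    rw [hk] at h5
    exact ⟨k, by nlinarith⟩
  let f : MulAut A5 →* Equiv.Perm (Sylow 2 A5) := MulAction.toPermHom _ _
  have hinj : Function.Injective f := by
    have hbot : f.ker.comap MulAut.conj = ⊥ := by
      rcases (inferInstance : (f.ker.comap (MulAut.conj (G := A5))).Normal).eq_bot_or_eq_top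
        with h | h
      · exact h
      · exfalso
        have hn : V4.Normal := by
          constructor
          intro x hx g
          have hg : MulAut.conj g ∈ f.ker := by
            have : g ∈ f.ker.comap MulAut.conj := h ▸ Subgroup.mem_top g
            exact this
          have h1 : MulAut.conj g • P = P := congrArg (fun e => e P) hg
          have h2 : MulAut.conj g x ∈ MulAut.conj g • P := ⟨x, hx, rfl⟩
          rw [h1] at h2
          exact h2
        rcases hn.eq_bot_or_eq_top with h | h
        · have := V4_card; rw [h, Subgroup.card_bot] at this; omega
        · have := V4_card; rw [h, Subgroup.card_top, A5_card] at this; omega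
    rw [injective_iff_map_eq_one]
    intro φ hφ
    ext1 x
    have h1 : φ x * x⁻¹ ∈ f.ker.comap MulAut.conj := by
      have h2 : MulAut.conj (φ x * x⁻¹) = φ * (MulAut.conj x * φ⁻¹ * (MulAut.conj x)⁻¹) := by
        ext1 y
        simp [MulAut.conj_apply, mul_assoc]
      rw [Subgroup.mem_comap, h2]
      refine mul_mem hφ ((inferInstance : f.ker.Normal).conj_mem _ (inv_mem hφ) _)
    rw [hbot, Subgroup.mem_bot, mul_inv_eq_one] at h1
    exact h1
  have h1 := Subgroup.card_dvd_of_injective f hinj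
  rw [Nat.card_perm] at h1
  refine h1.trans ?_
  have : Nat.card (Sylow 2 A5) ≤ 5 := Nat.le_of_dvd (by norm_num) hidx
  exact Nat.factorial_dvd_factorial this

section
open Subgroup
variable {G : Type u} [Group G]

lemma card_mulAut {T : Type*} [Group T] (h : Nonempty (T ≃* A5)) : Nat.card (MulAut T) ∣ 120 := by
  obtain ⟨e⟩ := h
  rw [Nat.card_congr (MulAut.congr e).toEquiv]
  exact card_mulAut_A5

lemma not_dvd_120 {q : ℕ} (hq : q.Prime) (h : q ∉ ({2, 3, 5} : Set ℕ)) : ¬ q ∣ 120 := by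
  intro hd
  apply h
  rw [show 120 = 2 ^ 3 * 3 * 5 by norm_num] at hd
  rcases hq.dvd_mul.1 hd with hd | hd
  · rcases hq.dvd_mul.1 hd with hd | hd
    · exact Or.inl ((Nat.prime_dvd_prime_iff_eq hq Nat.prime_two).1 (hq.dvd_of_dvd_pow hd))
    · exact Or.inr (Or.inl ((Nat.prime_dvd_prime_iff_eq hq Nat.prime_three).1 hd))
  · exact Or.inr (Or.inr ((Nat.prime_dvd_prime_iff_eq hq Nat.prime_five).1 hd))

lemma prime_of_235 {p : ℕ} (h : p ∈ ({2, 3, 5} : Set ℕ)) : p.Prime := by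
  rcases h with rfl | rfl | rfl <;> norm_num

lemma commute_of_order [Finite G] {T : Subgroup G} (hT : Nonempty (T ≃* A5)) {g : G} {q : ℕ}
    (hq : q.Prime) (hq' : q ∉ ({2, 3, 5} : Set ℕ)) (hg : orderOf g = q)
    (hn : ∀ t ∈ T, g * t * g⁻¹ ∈ T) {t : G} (ht : t ∈ T) : Commute g t := by
  have hgn : g ∈ normalizer (T : Set G) := mem_normalizer_of_conj hn
  have h1 : T.normalizerMonoidHom ⟨g, hgn⟩ = 1 := by
    by_contra h1
    have := orderOf_map_prime hq (g := (⟨g, hgn⟩ : normalizer (T : Set G)))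
      (by rwa [orderOf_mk]) _ h1
    exact not_dvd_120 hq hq' (this ▸ (_root_.orderOf_dvd_natCard _).trans (card_mulAut hT))
  have : (⟨g, hgn⟩ : normalizer (T : Set G)) ∈ T.normalizerMonoidHom.ker := h1
  rw [normalizerMonoidHom_ker, mem_subgroupOf, mem_centralizer_iff] at this
  exact (this t ht).symm

lemma exists_ord_A5 [Finite G] {T : Subgroup G} (hT : Nonempty (T ≃* A5)) {p : ℕ}
    (hp : p ∈ ({2, 3, 5} : Set ℕ)) : ∃ x ∈ T, orderOf x = p := by
  obtain ⟨e⟩ := hT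
  have h1 : Nat.card T = 60 := by rw [Nat.card_congr e.toEquiv, A5_card]
  obtain ⟨x, hx⟩ := exists_ord (G := T) (prime_of_235 hp) (by
    rw [h1]; rcases hp with rfl | rfl | rfl <;> norm_num)
  exact ⟨x, x.2, by rw [orderOf_coe, hx]⟩

lemma center_A5 {T : Subgroup G} (hT : Nonempty (T ≃* A5)) {x : G} (hx : x ∈ T)
    (h : ∀ t ∈ T, Commute x t) : x = 1 := by
  obtain ⟨e⟩ := hT
  have hs : IsSimpleGroup T := e.isSimpleGroup
  rcases (inferInstance : (center T).Normal).eq_bot_or_eq_top with h1 | h1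
  · have : (⟨x, hx⟩ : T) ∈ center T := mem_center_iff.2 fun g => Subtype.ext (h g g.2).symm
    rw [h1, mem_bot] at this
    exact congrArg Subtype.val this
  · exfalso
    have hsol : Group.IsSolvable T := Group.isSolvable_of_comm (fun a b => by
      have : b ∈ center T := h1 ▸ mem_top b
      exact mem_center_iff.1 this a)
    exact not_sol_A5 (Group.isSolvable_of_surjective (f := e.toMonoidHom) e.surjective)

structure MinComp (M T : Subgroup G) : Prop where
  le : T ≤ M
  iso : Nonempty (T ≃* A5)
  norm : ∀ m ∈ M, ∀ t ∈ T, m * t * m⁻¹ ∈ T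
  alt : ∀ g, (∀ t ∈ T, g * t * g⁻¹ ∈ T) ∨ (∀ t ∈ T, ∀ t' ∈ T, Commute t (g * t' * g⁻¹))
  gen : normalClosure (T : Set G) = M
  cent : ∀ x ∈ M, (∀ y ∈ M, Commute x y) → x = 1

lemma mem_of_gen {T : Subgroup G} {K : Subgroup G} (h : ∀ g, ∀ t ∈ T, g * t * g⁻¹ ∈ K) :
    normalClosure (T : Set G) ≤ K := by
  rw [normalClosure, closure_le]
  intro x hx
  obtain ⟨t, ht, hc⟩ := Group.mem_conjugatesOfSet_iff.1 hx
  obtain ⟨g, rfl⟩ := isConj_iff.1 hc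
  exact h g t ht

lemma IsMinNormal.exists_comp [Finite G] (hG : PS G) {M : Subgroup G} (hM : IsMinNormal M)
    (hs : ¬ Group.IsSolvable M) : ∃ T, MinComp M T := by
  have hMn := hM.normal
  have hfin : {K : Subgroup G | K ≠ ⊥ ∧ K ≤ M ∧ ∀ m ∈ M, ∀ t ∈ K, m * t * m⁻¹ ∈ K}.Finite :=
    Set.toFinite _
  obtain ⟨T, hT⟩ := hfin.exists_minimal ⟨M, hM.ne_bot, le_rfl, fun m hm t ht =>
    mul_mem (mul_mem hm ht) (inv_mem hm)⟩
  obtain ⟨hT0, hTM, hTn⟩ := hT.1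
  have hmin : ∀ K ≤ T, (∀ m ∈ M, ∀ t ∈ K, m * t * m⁻¹ ∈ K) → K = ⊥ ∨ K = T := by
    intro K hK hKn
    by_cases h0 : K = ⊥
    · exact Or.inl h0
    · exact Or.inr (le_antisymm hK (hT.2 ⟨h0, hK.trans hTM, hKn⟩ hK))
  have halt : ∀ g, (∀ t ∈ T, g * t * g⁻¹ ∈ T) ∨
      (∀ t ∈ T, ∀ t' ∈ T, Commute t (g * t' * g⁻¹)) := by
    intro g
    let Tg : Subgroup G := T.map (MulAut.conj g).toMonoidHom
    have hTg : ∀ x, x ∈ Tg ↔ ∃ t ∈ T, g * t * g⁻¹ = x := fun x => Iff.rfl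
    have hTgn : ∀ m ∈ M, ∀ t ∈ Tg, m * t * m⁻¹ ∈ Tg := by
      rintro m hm _ ⟨t, ht, rfl⟩
      refine ⟨_, hTn (g⁻¹ * m * g) ?_ t ht, ?_⟩
      · simpa using hMn.conj_mem m hm g⁻¹
      · simp [mul_assoc]
    rcases hmin (T ⊓ Tg) inf_le_left (fun m hm t ht => ⟨hTn m hm t ht.1, hTgn m hm t ht.2⟩)
      with h | h
    · right
      intro t ht t' ht'
      have hm : g * t' * g⁻¹ ∈ Tg := ⟨t', ht', rfl⟩
      have hM' : g * t' * g⁻¹ ∈ M := hMn.conj_mem _ (hTM ht') g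
      have h1 : t * (g * t' * g⁻¹) * t⁻¹ * (g * t' * g⁻¹)⁻¹ ∈ T ⊓ Tg := by
        constructor
        · rw [mul_assoc, mul_assoc]
          refine mul_mem ht ?_
          have := hTn _ hM' _ (inv_mem ht)
          rwa [mul_assoc] at this
        · exact Tg.mul_mem (hTgn t (hTM ht) _ hm) (Tg.inv_mem hm)
      rw [h, mem_bot, mul_inv_eq_one, mul_inv_eq_iff_eq_mul] at h1
      exact h1
    · left
      have hle : T ≤ Tg := inf_eq_left.1 h
      have he : T = Tg := eq_of_le_of_card_ge hle
        (Nat.card_congr (T.equivMapOfInjective _ (MulAut.conj g).injective).toEquiv).ge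
      intro t ht
      rw [he]
      exact ⟨t, ht, rfl⟩
  have hgen : normalClosure (T : Set G) = M := by
    have h1 : normalClosure (T : Set G) ≤ M := normalClosure_le_normal hTM
    rcases hM.min _ h1 inferInstance with h | h
    · exfalso
      apply hT0
      rw [eq_bot_iff, ← h]
      exact subset_normalClosure
    · exact h
  have hcomm_of : (∀ t ∈ T, ∀ t' ∈ T, Commute t t') → ∀ x ∈ M, ∀ y ∈ M, Commute x y := by
    intro hTc
    have h1 : ∀ x ∈ T, ∀ y ∈ M, Commute x y := by
      intro x hx
      have : M ≤ centralizer {x} := by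
        rw [← hgen]
        apply mem_of_gen
        intro g t ht
        rw [mem_centralizer_singleton_iff]
        rcases halt g with h | h
        · exact (hTc _ hx _ (h t ht)).symm
        · exact (h x hx t ht).symm
      intro y hy
      exact (mem_centralizer_singleton_iff.1 (this hy)).symm
    intro x hx y hy
    have : M ≤ centralizer {y} := by
      rw [← hgen]
      apply mem_of_gen
      intro g t ht
      rw [mem_centralizer_singleton_iff]
      have := h1 t ht (g⁻¹ * y * g) (by simpa using hMn.conj_mem y hy g⁻¹)
      have h2 := this.map (MulAut.conj g).toMonoidHom
      simpa [mul_assoc] using h2.eq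
    exact (mem_centralizer_singleton_iff.1 (this hx))
  have hnab : ¬ ∀ x ∈ M, ∀ y ∈ M, Commute x y := fun h =>
    hs (Group.isSolvable_of_comm fun a b => Subtype.ext (h a a.2 b b.2))
  have hnt : Nontrivial T := (nontrivial_iff_ne_bot T).2 hT0
  have hsimp : IsSimpleGroup T := by
    refine { exists_pair_ne := hnt.exists_pair_ne, eq_bot_or_eq_top_of_normal := ?_ }
    intro K hK
    have h1 : M ≤ normalizer (K.map T.subtype : Set G) := by
      rw [← hgen]
      apply mem_of_gen
      intro g t ht
      apply mem_normalizer_of_conj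
      rintro _ ⟨k, hk, rfl⟩
      rcases halt g with h | h
      · exact ⟨_, hK.conj_mem k hk ⟨_, h t ht⟩, rfl⟩
      · have := h k k.2 t ht
        show g * t * g⁻¹ * (k : G) * (g * t * g⁻¹)⁻¹ ∈ _
        rw [← this.eq, mul_inv_cancel_right]
        exact ⟨k, hk, rfl⟩
    rcases hmin (K.map T.subtype) (map_subtype_le K) (fun m hm t ht =>
      (mem_normalizer_iff.1 (h1 hm) t).1 ht) with h | h
    · left
      rwa [map_eq_bot_iff_of_injective _ T.subtype_injective] at h
    · right
      apply map_injective T.subtype_injective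
      rw [h, ← MonoidHom.range_eq_map, T.range_subtype]
  have hPS : PS T := by
    refine (hG.normal M).inj (inclusion hTM) (inclusion_injective hTM) ?_
    constructor
    rintro _ ⟨t, rfl⟩ m
    exact ⟨⟨_, hTn m m.2 t t.2⟩, rfl⟩
  refine ⟨T, hTM, ?_, hTn, halt, hgen, ?_⟩
  · rcases hPS.simple hsimp with h | h
    · exfalso
      have := IsSimpleGroup.comm_iff_isSolvable.2 h
      exact hnab (hcomm_of fun t ht t' ht' => congrArg Subtype.val (this ⟨t, ht⟩ ⟨t', ht'⟩))
    · exact h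
  · have hCn : (M ⊓ centralizer (M : Set G)).Normal := by
      constructor
      rintro x ⟨hx, hx'⟩ g
      have hx' := mem_centralizer_iff.1 hx'
      refine ⟨hMn.conj_mem x hx g, mem_centralizer_iff.2 ?_⟩
      intro y hy
      have := hx' (g⁻¹ * y * g) (by simpa using hMn.conj_mem y hy g⁻¹)
      have h2 := congrArg (fun z => g * z * g⁻¹) this
      simpa [mul_assoc] using h2
    rcases hM.min _ inf_le_left hCn with h | h
    · intro x hx hxc
      have : x ∈ M ⊓ centralizer (M : Set G) :=
        ⟨hx, mem_centralizer_iff.2 fun y hy => (hxc y hy).symm⟩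
      rwa [h, mem_bot] at this
    · exfalso
      apply hnab
      intro x hx y hy
      rw [← h] at hx
      exact (mem_centralizer_iff.1 hx.2 y hy).symm

lemma MinComp.not_dvd [Finite G] {M T : Subgroup G} (hMn : M.Normal) (h : MinComp M T) {q : ℕ}
    (hq : q.Prime) (hq' : q ∉ ({2, 3, 5} : Set ℕ)) : ¬ q ∣ Nat.card M := by
  intro hd
  obtain ⟨g, hg⟩ := exists_ord hq hd
  rw [← orderOf_coe] at hg
  refine ne_one_of_ord hq hg (h.cent g g.2 ?_)
  have hle : M ≤ centralizer {(g : G)} := by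
    conv_lhs => rw [← h.gen]
    apply mem_of_gen
    intro k t ht
    rw [mem_centralizer_singleton_iff]
    have hg' : k⁻¹ * g * k ∈ M := by simpa using hMn.conj_mem g g.2 k⁻¹
    have ho : orderOf (k⁻¹ * g * k) = q := by
      rw [← hg]
      have := orderOf_injective (MulAut.conj k⁻¹).toMonoidHom (MulAut.conj k⁻¹).injective (g : G)
      simpa using this
    have h1 := commute_of_order h.iso hq hq' ho (h.norm _ hg') ht
    have h2 := h1.map (MulAut.conj k).toMonoidHom
    simpa [mul_assoc] using h2.eq.symm
  intro y hy
  exact (mem_centralizer_singleton_iff.1 (hle hy)).symm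

lemma MinComp.hasOrd [Finite G] {M T : Subgroup G} (hMn : M.Normal) (h : MinComp M T) {p q : ℕ}
    (hq : q.Prime) (hq' : q ∉ ({2, 3, 5} : Set ℕ)) (hp : p ∈ ({2, 3, 5} : Set ℕ))
    (hd : q ∣ Nat.card G) : HasOrd G (p * q) := by
  have hpp := prime_of_235 hp
  have hne : p ≠ q := fun h => hq' (h ▸ hp)
  obtain ⟨g, hg⟩ := exists_ord hq hd
  obtain ⟨x, hx, hxp⟩ := exists_ord_A5 h.iso hp
  have hgq : g ^ q = 1 := by rw [← hg, pow_orderOf_eq_one]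
  by_cases hgT : ∀ t ∈ T, g * t * g⁻¹ ∈ T
  · exact HasOrd.of_commute hpp hq hne hxp hg (commute_of_order h.iso hq hq' hg hgT hx).symm
  have hk : ∀ k, 0 < k → k < q → ∀ t ∈ T, Commute t (g ^ k * x * (g ^ k)⁻¹) := by
    intro k hk0 hkq
    rcases h.alt (g ^ k) with h1 | h1
    · exfalso
      apply hgT
      have hcop : Nat.Coprime k q := by
        refine ((Nat.Prime.coprime_iff_not_dvd hq).2 fun hd => ?_).symm
        exact absurd (Nat.le_of_dvd hk0 hd) (by omega)
      obtain ⟨m, -, hm⟩ := Nat.exists_mul_mod_eq_one_of_coprime hcop hq.one_lt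
      have h4 : g = (g ^ k) ^ m := by
        rw [← pow_mul, ← Nat.div_add_mod (k * m) q, hm, pow_add, pow_mul, hgq, one_pow, one_mul,
          pow_one]
      have h5 : g ∈ normalizer (T : Set G) := by
        rw [h4]; exact pow_mem (mem_normalizer_of_conj h1) m
      exact fun t ht => (mem_normalizer_iff.1 h5 t).1 ht
    · exact fun t ht => h1 t ht x hx
  have hy : ∀ k, k < q → ∃ d, (∀ t ∈ T, Commute t d) ∧ (x * g) ^ (k + 1) = x * d * g ^ (k + 1) := by
    intro k
    induction k with
    | zero => intro _; exact ⟨1, fun t _ => Commute.one_right t, by simp⟩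
    | succ k ih =>
      intro hkq
      obtain ⟨d, hd, he⟩ := ih (by omega)
      refine ⟨d * (g ^ (k + 1) * x * (g ^ (k + 1))⁻¹), fun t ht =>
        (hd t ht).mul_right (hk (k + 1) (by omega) hkq t ht), ?_⟩
      rw [pow_succ, he, pow_succ g (k + 1)]
      group
  obtain ⟨d, hdT, hyq⟩ := hy (q - 1) (Nat.sub_lt hq.pos one_pos)
  rw [Nat.sub_add_cancel hq.one_lt.le, hgq, mul_one] at hyq
  have hpdvd : p ∣ orderOf (x * g) := by
    rw [← hxp]
    apply orderOf_dvd_of_pow_eq_one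
    set n := orderOf (x * g) with hn
    have h1 : (x * d) ^ n = 1 := by
      rw [← hyq, ← pow_mul, mul_comm, pow_mul, hn, pow_orderOf_eq_one, one_pow]
    rw [(hdT x hx).mul_pow] at h1
    refine center_A5 h.iso (pow_mem hx n) (fun t ht => ?_)
    rw [eq_inv_of_mul_eq_one_left h1]
    exact ((hdT t ht).pow_right n).inv_right.symm
  have hqdvd : q ∣ orderOf (x * g) := by
    have h1 : QuotientGroup.mk' M (x * g) = QuotientGroup.mk' M g := by
      have : QuotientGroup.mk' M x = 1 := (QuotientGroup.eq_one_iff x).2 (h.le hx)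
      rw [map_mul, this, one_mul]
    have h2 : orderOf (QuotientGroup.mk' M g) = q := by
      apply orderOf_map_prime hq hg
      intro h3
      exact h.not_dvd hMn hq hq' (dvd_card_of_mem ((QuotientGroup.eq_one_iff g).1 h3) hg)
    rw [← h2, ← h1]
    exact orderOf_map_dvd _ _
  exact HasOrd.of_dvd (Nat.Coprime.mul_dvd_of_dvd_of_dvd ((Nat.coprime_primes hpp hq).2 hne)
    hpdvd hqdvd)

lemma MinComp.hasOrd' [Finite G] {M T : Subgroup G} (h : MinComp M T) {p q : ℕ}
    (hp : p = 3 ∨ p = 5) (hq : q ∈ ({2, 3, 5} : Set ℕ)) (hne : p ≠ q)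
    (hr : ¬ Rank1 p G) : HasOrd G (p * q) := by
  have hp' : p ∈ ({2, 3, 5} : Set ℕ) := Or.inr hp
  have hpp := prime_of_235 hp'
  have hqq := prime_of_235 hq
  obtain ⟨x, hx, hxp⟩ := exists_ord_A5 h.iso hp'
  obtain ⟨x', hx', hxp'⟩ := exists_ord_A5 h.iso hq
  by_cases hT : ∃ g, ¬ ∀ t ∈ T, g * t * g⁻¹ ∈ T
  · obtain ⟨g, hg⟩ := hT
    have h1 := (h.alt g).resolve_left hg x hx x' hx'
    refine HasOrd.of_commute hpp hqq hne hxp ?_ h1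
    rw [← hxp']
    exact orderOf_injective (MulAut.conj g).toMonoidHom (MulAut.conj g).injective x'
  · push Not at hT
    have hTn : T.Normal := ⟨fun t ht g => hT g t ht⟩
    let f : G →* MulAut T := MulAut.conjNormal
    have hfin : Finite (MulAut T) := inferInstance
    have hr2 : Rank1 p (MulAut T) := Rank1.of_card hpp (fun hd => by
      have := hd.trans (card_mulAut h.iso)
      rcases hp with rfl | rfl <;> revert this <;> norm_num)
    have h2 : ∃ g, f g = 1 ∧ g ^ p = 1 ∧ g ≠ 1 := by
      by_contra hcon
      push Not at hcon
      exact hr (hr2.of_ker hpp f hcon)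
    obtain ⟨g, hg, hgp, hg1⟩ := h2
    refine HasOrd.of_commute hpp hqq hne (orderOf_prime_of hpp hgp hg1) hxp' ?_
    have h3 := congrArg (fun φ : MulAut T => ((φ ⟨x', hx'⟩ : T) : G)) hg
    simp only [f, MulAut.conjNormal_apply, MulAut.one_apply] at h3
    exact mul_inv_eq_iff_eq_mul.1 h3

end

section
open Subgroup
variable {G : Type u} [Group G] [Finite G]

lemma chiefPS (hG : PS G) (X : Set ℕ) (hX : ∀ p ∈ X, p.Prime)
    (hd : ∃ p ∈ X, p ∣ Nat.card G) :
    ∃ N : Subgroup G, ∃ _ : N.Normal, (∀ p ∈ X, ¬ p ∣ Nat.card N) ∧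
      ∃ M : Subgroup (G ⧸ N), M.Normal ∧
        (((∃ T, MinComp M T) ∧ ∃ p ∈ X, p ∈ ({2, 3, 5} : Set ℕ) ∧ p ∣ Nat.card M) ∨
          ∃ p ∈ X, ElemP p M) := by
  obtain ⟨N, hN, h1, M, hM, h2⟩ := chief_primes X hX hd
  refine ⟨N, hN, h1, M, hM.normal, ?_⟩
  rcases h2 with ⟨h2, p, hp, hpd⟩ | h2
  · obtain ⟨T, hT⟩ := hM.exists_comp (hG.quot N) h2
    refine Or.inl ⟨⟨T, hT⟩, p, hp, ?_, hpd⟩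
    by_contra hc
    exact hT.not_dvd hM.normal (hX p hp) hc hpd
  · exact Or.inr h2

lemma MinComp.hasOrd_rank {M T : Subgroup G} (hMn : M.Normal) (h : MinComp M T) {p q : ℕ}
    (hq : q.Prime) (hp : p ∈ ({2, 3, 5} : Set ℕ)) (hne : p ≠ q)
    (hd : q ∣ Nat.card G) (h1 : ¬ Rank1 p G) (h2 : ¬ Rank1 q G) : HasOrd G (p * q) := by
  by_cases hq' : q ∈ ({2, 3, 5} : Set ℕ)
  · rcases hp with rfl | hp
    · rcases hq' with rfl | hq'
      · exact absurd rfl hne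
      · exact (h.hasOrd' hq' (Or.inl rfl) hne.symm h2).symm
    · exact h.hasOrd' hp hq' hne h1
  · exact h.hasOrd hMn hq hq' hp hd

lemma dvd_of_not_rank1 {p : ℕ} (hp : p.Prime) (h : ¬ Rank1 p G) : p ∣ Nat.card G := by
  by_contra hd
  exact h (Rank1.of_card hp fun h2 => hd ((dvd_pow_self p two_ne_zero).trans h2))

lemma L1 (hG : PS G) {p q : ℕ} (hp : p.Prime) (hq : q.Prime) (hne : p ≠ q)
    (h1 : ¬ Rank1 p G) (h2 : ¬ Rank1 q G) : HasOrd G (p * q) := by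
  by_contra hn
  have hpd := dvd_of_not_rank1 hp h1
  have hqd := dvd_of_not_rank1 hq h2
  obtain ⟨N, hN, hXN, M, hM, h⟩ := chiefPS hG {p, q} (by rintro x (rfl | rfl) <;> assumption)
    ⟨p, Or.inl rfl, hpd⟩
  have hpN := hXN p (Or.inl rfl)
  have hqN := hXN q (Or.inr rfl)
  have h1' : ¬ Rank1 p (G ⧸ N) := fun h => h1 (Rank1.of_quot hp N hpN h)
  have h2' : ¬ Rank1 q (G ⧸ N) := fun h => h2 (Rank1.of_quot hq N hqN h)
  have hn' : ¬ HasOrd (G ⧸ N) (p * q) := fun h => hn h.of_quot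
  rcases h with ⟨⟨T, hT⟩, s, hs, hs', -⟩ | ⟨s, hs, hV⟩
  · rcases hs with rfl | rfl
    · exact hn' (hT.hasOrd_rank hM hq hs' hne (card_quot_dvd hq N hqd hqN) h1' h2')
    · exact hn' (hT.hasOrd_rank hM hp hs' hne.symm (card_quot_dvd hp N hpd hpN) h2' h1').symm
  · rcases hs with rfl | rfl
    · exact h2' (hV.rank1 hp hq hne hn')
    · exact h1' (hV.rank1 hq hp hne.symm (fun h => hn' h.symm))

lemma not_sol_quot_rad {R : Subgroup G} (hR : IsRad R) (hs : ¬ Group.IsSolvable G) :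
    haveI := hR.normal; ¬ Group.IsSolvable (G ⧸ R) := by
  have := hR.normal
  exact fun h => hs (sol_of_ext R hR.sol h)

/-- `A₅` embedded as component in `G/R`. -/
lemma IsRad.exists_comp (hG : PS G) (hs : ¬ Group.IsSolvable G) {R : Subgroup G} (hR : IsRad R) :
    haveI := hR.normal; ∃ M T : Subgroup (G ⧸ R), M.Normal ∧ MinComp M T := by
  have := hR.normal
  have hs' := not_sol_quot_rad hR hs
  have hne : (⊤ : Subgroup (G ⧸ R)) ≠ ⊥ := by
    intro h
    apply hs'
    refine Group.isSolvable_of_comm fun a b => ?_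
    have ha : a ∈ (⊤ : Subgroup (G ⧸ R)) := mem_top a
    have hb : b ∈ (⊤ : Subgroup (G ⧸ R)) := mem_top b
    rw [h, mem_bot] at ha hb
    rw [ha, hb]
  obtain ⟨M, -, hM⟩ := exists_minNormal (⊤ : Subgroup (G ⧸ R)) inferInstance hne
  have hMs : ¬ Group.IsSolvable M := fun h => hM.ne_bot (hR.quot_trivial M hM.normal h)
  obtain ⟨T, hT⟩ := hM.exists_comp (hG.quot R) hMs
  exact ⟨M, T, hM.normal, hT⟩

lemma frattRad (hG : PS G) (hs : ¬ Group.IsSolvable G) {R : Subgroup G} (hR : IsRad R)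
    {p q : ℕ} (hp : p.Prime) (hq : q ∈ ({2, 3, 5} : Set ℕ)) (hne : p ≠ q) (hr : Rank1 p G)
    (hd : p ∣ Nat.card R) : HasOrd G (p * q) := by
  have := hR.normal
  exact frattini1 hp (prime_of_235 hq) hne hr R hd
    ((hG.quot R).dvd_commutator (not_sol_quot_rad hR hs) hq)

lemma L5 (hG : PS G) (hs : ¬ Group.IsSolvable G) {p r : ℕ} (hr : r.Prime)
    (hr' : r ∉ ({2, 3, 5} : Set ℕ)) (hd : r ∣ Nat.card G) (hr1 : Rank1 r G)
    (hp : p ∈ ({2, 3, 5} : Set ℕ)) : HasOrd G (p * r) := by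
  obtain ⟨R, hR⟩ := exists_rad (G := G)
  have := hR.normal
  by_cases hrR : r ∣ Nat.card R
  · exact (frattRad hG hs hR hr hp (fun h => hr' (h ▸ hp)) hr1 hrR).symm
  · obtain ⟨M, T, hM, hT⟩ := hR.exists_comp hG hs
    exact (hT.hasOrd hM hr hr' hp (card_quot_dvd hr R hd hrR)).of_quot

/-- a neighbour in `{2,3,5}` of an outer prime has rank one -/
lemma rank1_of_adj (hG : PS G) (hs : ¬ Group.IsSolvable G) {p r : ℕ} (hr : r.Prime)
    (hr' : r ∉ ({2, 3, 5} : Set ℕ)) (hd : r ∣ Nat.card G)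
    (hp : p ∈ ({2, 3, 5} : Set ℕ)) (hn : ¬ HasOrd G (p * r)) : Rank1 p G := by
  by_contra h
  have h1 : ¬ Rank1 r G := fun h1 => hn (L5 hG hs hr hr' hd h1 hp)
  exact hn (L1 hG (prime_of_235 hp) hr (fun h => hr' (h ▸ hp)) h h1)

lemma L2 (hG : PS G) {p q : ℕ} (hp : p.Prime) (hq : q.Prime) (hne : p ≠ q)
    (hrp : Rank1 p G) (hrq : Rank1 q G) (hpd : p ∣ Nat.card (commutator G))
    (hqd : q ∣ Nat.card (commutator G))
    (h : Group.IsSolvable G ∨ p ∉ ({2, 3, 5} : Set ℕ)) : HasOrd G (p * q) := by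
  obtain ⟨N, hN, hXN, M, hM, hc⟩ := chiefPS hG {p} (by rintro x rfl; assumption)
    ⟨p, rfl, hpd.trans (card_subgroup_dvd_card _)⟩
  have hpN := hXN p rfl
  by_cases hqN : q ∣ Nat.card N
  · exact (frattini1 hq hp hne.symm hrq N hqN (dvd_commutator_quot hp N hpN hpd)).symm
  · rcases hc with ⟨⟨T, hT⟩, s, rfl, hs', -⟩ | ⟨s, rfl, hV⟩
    · rcases h with h | h
      · exfalso
        obtain ⟨e⟩ := hT.iso
        have h1 : Group.IsSolvable (G ⧸ N) := inferInstance
        have h2 : Group.IsSolvable T := inferInstance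
        exact not_sol_A5 (Group.isSolvable_of_surjective (f := e.toMonoidHom) e.surjective)
      · exact absurd hs' h
    · have hU : (M.comap (QuotientGroup.mk' N)).Normal := inferInstance
      refine frattini1 hp hq hne hrp (M.comap (QuotientGroup.mk' N)) ?_
        (dvd_commutator_quot hq _ ?_ hqd)
      · rw [card_comap_mk]; exact (hV.dvd hp).mul_right _
      · rw [card_comap_mk, hq.dvd_mul]
        push Not
        exact ⟨hV.not_dvd hp hq hne.symm, hqN⟩

end

lemma w_c3 : ∀ w ∈ V4, (w * c3) ^ 3 = 1 ∧ (w * c3) * v1 * (w * c3)⁻¹ ≠ v1 := by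
  rintro a (rfl | rfl | rfl | rfl) <;> decide

lemma V4_comm : ∀ w ∈ V4, ∀ x ∈ V4, w * x * w⁻¹ = x := by
  rintro a (rfl | rfl | rfl | rfl) b (rfl | rfl | rfl | rfl) <;> decide

section
open Subgroup
variable {G : Type u} [Group G] [Finite G]

lemma lemmaT_aux {H : Type*} [Group H] (f : G →* H) (hf : Function.Surjective f) (ι : A5 →* H) :
    ∃ (S : Subgroup G) (h s1 s2 : G) (d : A5) (k : ℕ), IsPGroup 2 S ∧ (∀ s ∈ S, h * s * h⁻¹ ∈ S) ∧
      orderOf h = 3 ^ k ∧ f h = ι d ∧ d ^ 3 = 1 ∧ d * v1 * d⁻¹ ≠ v1 ∧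
      s1 ∈ S ∧ s2 ∈ S ∧ f s1 = ι v1 ∧ f s2 = ι v2 := by
  let A : Subgroup G := (V4.map ι).comap f
  have hA : ∀ a, a ∈ A ↔ ∃ v ∈ V4, ι v = f a := fun a => Iff.rfl
  have := Fact.mk Nat.prime_two
  obtain ⟨P⟩ : Nonempty (Sylow 2 A) := inferInstance
  obtain ⟨h0, hh0⟩ := hf (ι c3)
  have hn : h0 ∈ normalizer (A : Set G) := by
    apply mem_normalizer_of_conj
    intro a ha
    obtain ⟨v, hv, hva⟩ := (hA a).1 ha
    refine (hA _).2 ⟨_, c3_V4 v hv, ?_⟩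
    simp [hh0, hva]
  let φ : MulAut A := A.normalizerMonoidHom ⟨h0, hn⟩
  obtain ⟨a, ha⟩ := MulAction.exists_smul_eq A (φ • P) P
  let S : Subgroup G := (P : Subgroup A).map A.subtype
  have hS : ∀ x : A, x ∈ P → (x : G) ∈ S := fun x hx => ⟨x, hx, rfl⟩
  have hS2 : IsPGroup 2 S := P.2.map _
  have hlift : ∀ v ∈ V4, v ^ 2 = 1 → ∃ s ∈ S, f s = ι v := by
    intro v hv hv2
    obtain ⟨g, hg⟩ := hf (ι v)
    obtain ⟨m, k, hm, hk⟩ := exists_ppart g Nat.prime_two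
    have hgm : f (g ^ m) = ι v := by
      rw [map_pow, hg, ← map_pow]
      congr 1
      have : m = 2 * (m / 2) + 1 := by
        have : m % 2 = 1 := hm
        omega
      rw [this, pow_succ, pow_mul, hv2, one_pow, one_mul]
    have hmA : g ^ m ∈ A := (hA _).2 ⟨v, hv, hgm.symm⟩
    have hpz : IsPGroup 2 (zpowers (⟨g ^ m, hmA⟩ : A)) := by
      apply IsPGroup.of_card (n := k)
      rw [Nat.card_zpowers, orderOf_mk, hk]
    obtain ⟨Q, hQ⟩ := hpz.exists_le_sylow
    obtain ⟨b, hb⟩ := MulAction.exists_smul_eq A Q P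
    have h1 : b * ⟨g ^ m, hmA⟩ * b⁻¹ ∈ P := by
      rw [← hb]
      exact ⟨_, hQ (mem_zpowers _), rfl⟩
    refine ⟨_, hS _ h1, ?_⟩
    obtain ⟨w, hw, hwb⟩ := (hA b).1 b.2
    simp only [coe_mul, map_mul, coe_inv, map_inv, hgm, ← hwb]
    rw [← map_inv, ← map_mul, ← map_mul, V4_comm w hw v hv]
  obtain ⟨s1, hs1, hfs1⟩ := hlift v1 (mem_V4.2 (Or.inr (Or.inl rfl))) (by decide)
  obtain ⟨s2, hs2, hfs2⟩ := hlift v2 (mem_V4.2 (Or.inr (Or.inr (Or.inl rfl)))) (by decide)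
  have hh1 : (a : G) * h0 ∈ normalizer (S : Set G) := by
    apply mem_normalizer_of_conj
    rintro _ ⟨x, hx, rfl⟩
    have h1 : a * φ x * a⁻¹ ∈ P := by
      have h2 : a * φ x * a⁻¹ ∈ a • (φ • P) := ⟨_, ⟨x, hx, rfl⟩, rfl⟩
      rwa [ha] at h2
    have h2 := hS _ h1
    have h3 : ((φ x : A) : G) = h0 * x * h0⁻¹ := rfl
    simp only [coe_mul, coe_inv, h3] at h2
    simpa [mul_assoc] using h2
  obtain ⟨m, k, hm, hk⟩ := exists_ppart ((a : G) * h0) Nat.prime_three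
  obtain ⟨w, hw, hwa⟩ := (hA a).1 a.2
  obtain ⟨hw1, hw2⟩ := w_c3 w hw
  refine ⟨S, (a * h0) ^ m, s1, s2, w * c3, k, hS2, ?_, hk, ?_, hw1, hw2, hs1, hs2, hfs1, hfs2⟩
  · intro s hs
    exact (mem_normalizer_iff.1 (pow_mem hh1 m) s).1 hs
  · rw [map_pow, map_mul, hh0, ← hwa, ← map_mul, ← map_pow]
    congr 1
    have : m = 3 * (m / 3) + 1 := by
      have : m % 3 = 1 := hm
      omega
    rw [this, pow_succ, pow_mul, hw1, one_pow, one_mul]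

structure TData (R S : Subgroup G) (h s1 s2 : G) : Prop where
  two : IsPGroup 2 S
  norm : ∀ s ∈ S, h * s * h⁻¹ ∈ S
  ord : ∃ k, orderOf h = 3 ^ k
  cube : h ^ 3 ∈ R
  hR : h ∉ R
  m1 : s1 ∈ S
  m2 : s2 ∈ S
  n1 : s1 ∉ R
  sq1 : s1 ^ 2 ∈ R
  sq2 : s2 ^ 2 ∈ R
  n2 : s2 ∉ R
  n12 : s1⁻¹ * s2 ∉ R
  comm : s1 * s2 * s1⁻¹ * s2⁻¹ ∈ R
  nc : h * s1 * h⁻¹ ≠ s1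

lemma lemmaT (hG : PS G) (hs : ¬ Group.IsSolvable G) {R : Subgroup G} (hR : IsRad R) :
    ∃ (S : Subgroup G) (h s1 s2 : G), TData R S h s1 s2 := by
  have := hR.normal
  obtain ⟨M, T, hM, hT⟩ := hR.exists_comp hG hs
  obtain ⟨e⟩ := hT.iso
  let ι : A5 →* G ⧸ R := T.subtype.comp e.symm.toMonoidHom
  have hι : Function.Injective ι := T.subtype_injective.comp e.symm.injective
  obtain ⟨S, h, s1, s2, d, k, h1, h2, h3, h4, h5, h6, h7, h8, h9, h10⟩ :=
    lemmaT_aux (QuotientGroup.mk' R) (QuotientGroup.mk'_surjective R) ι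
  have hmem : ∀ g, g ∈ R ↔ QuotientGroup.mk' R g = 1 := fun g => (QuotientGroup.eq_one_iff g).symm
  have hmem1 : ∀ g a, QuotientGroup.mk' R g = ι a → (g ∈ R ↔ a = 1) := by
    intro g a hga
    rw [hmem, hga, map_eq_one_iff ι hι]
  refine ⟨S, h, s1, s2, h1, h2, ⟨k, h3⟩, ?_, ?_, h7, h8, ?_, ?_, ?_, ?_, ?_, ?_, ?_⟩
  · rw [hmem1 _ (d ^ 3) (by rw [map_pow, map_pow, h4])]; exact h5
  · rw [hmem1 _ _ h4]; rintro rfl; simp at h6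
  · rw [hmem1 _ _ h9]; decide
  · rw [hmem1 _ (v1 ^ 2) (by rw [map_pow, map_pow, h9])]; decide
  · rw [hmem1 _ (v2 ^ 2) (by rw [map_pow, map_pow, h10])]; decide
  · rw [hmem1 _ _ h10]; decide
  · rw [hmem1 _ (v1⁻¹ * v2) (by rw [map_mul, map_mul, map_inv, map_inv, h9, h10])]; decide
  · rw [hmem1 _ (v1 * v2 * v1⁻¹ * v2⁻¹) (by simp only [map_mul, map_inv, h9, h10])]; decide
  · intro hc
    apply h6
    apply hι
    have := congrArg (QuotientGroup.mk' R) hc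
    simpa only [map_mul, map_inv, h4, h9] using this

lemma IsPGroup.eq_one_of_mem {S R : Subgroup G} {p : ℕ} (hp : p.Prime) (hS : IsPGroup p S)
    (hR : ¬ p ∣ Nat.card R) {s : G} (hs : s ∈ S) (hs' : s ∈ R) : s = 1 := by
  obtain ⟨k, hk⟩ := hS ⟨s, hs⟩
  have hk : s ^ p ^ k = 1 := congrArg Subtype.val hk
  obtain ⟨j, -, hj⟩ := (Nat.dvd_prime_pow hp).1 (orderOf_dvd_of_pow_eq_one hk)
  rcases j with _ | j
  · rwa [pow_zero, orderOf_eq_one_iff] at hj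
  · exfalso
    have h1 := dvd_card_of_mem hs' hj
    exact hR ((dvd_pow_self p (Nat.succ_ne_zero j)).trans h1)

lemma eq_of_mem_zpowers_two {x y : G} (hx : orderOf x = 2) (hy : orderOf y = 2)
    (h : x ∈ zpowers y) : x = y := by
  classical
  obtain ⟨n, hn, h4⟩ := Finset.mem_image.1 (mem_zpowers_iff_mem_range_orderOf.1 h)
  rw [hy] at hn
  have hn := Finset.mem_range.1 hn
  interval_cases n
  · simp only [pow_zero] at h4
    exact absurd h4.symm (ne_one_of_ord Nat.prime_two hx)
  · simp only [pow_one] at h4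
    exact h4.symm

lemma two_dvd_rad (hG : PS G) (hs : ¬ Group.IsSolvable G) {R : Subgroup G} (hR : IsRad R)
    (hr : Rank1 2 G) : 2 ∣ Nat.card R := by
  by_contra hd
  obtain ⟨S, h, s1, s2, hT⟩ := lemmaT hG hs hR
  have h0 : ∀ s ∈ S, s ∈ R → s = 1 := fun s h1 h2 =>
    hT.two.eq_one_of_mem Nat.prime_two hd h1 h2
  have e1 := h0 _ (pow_mem hT.m1 2) hT.sq1
  have e2 := h0 _ (pow_mem hT.m2 2) hT.sq2
  have e3 := h0 _ (mul_mem (mul_mem (mul_mem hT.m1 hT.m2) (inv_mem hT.m1)) (inv_mem hT.m2)) hT.comm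
  rw [mul_inv_eq_one, mul_inv_eq_iff_eq_mul] at e3
  have o1 := orderOf_prime_of Nat.prime_two e1 (fun h => hT.n1 (h ▸ one_mem R))
  have o2 := orderOf_prime_of Nat.prime_two e2 (fun h => hT.n2 (h ▸ one_mem R))
  have h3 := hr s1 s2 o1 o2 e3
  have h4 := eq_of_mem_zpowers_two o2 o1 h3
  apply hT.n12
  rw [h4, inv_mul_cancel]
  exact one_mem R

lemma L2a (hG : PS G) (hs : ¬ Group.IsSolvable G) (hr : Rank1 2 G) {q : ℕ} (hq : q = 3 ∨ q = 5) :
    HasOrd G (2 * q) := by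
  obtain ⟨R, hR⟩ := exists_rad (G := G)
  exact frattRad hG hs hR Nat.prime_two (Or.inr hq) (by omega) hr (two_dvd_rad hG hs hR hr)

lemma L2b (hG : PS G) (hs : ¬ Group.IsSolvable G) {R : Subgroup G} (hR : IsRad R)
    (hr : Rank1 2 G) {t : G} (ht : orderOf t = 2) : centralizer {t} ⊔ R = ⊤ := by
  have := hR.normal
  obtain ⟨z, hzR, hz, hsup⟩ := fratt0 Nat.prime_two hr R (two_dvd_rad hG hs hR hr)
  obtain ⟨g, hg⟩ := conj_rank1 Nat.prime_two hr hz ht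
  have hconj : ∀ (g x : G), orderOf (g * x * g⁻¹) = orderOf x := fun g x =>
    orderOf_injective (MulAut.conj g).toMonoidHom (MulAut.conj g).injective x
  have hgt : g * z * g⁻¹ = t := eq_of_mem_zpowers_two (by rw [hconj, hz]) ht hg
  have key : ∀ x : G, ∃ n : G, Commute n z ∧ ∃ r ∈ R, n * r = x := by
    intro x
    have hx : x ∈ normalizer (zpowers z : Set G) ⊔ R := hsup ▸ mem_top x
    obtain ⟨n, hn, r, hr, rfl⟩ := mem_sup_of_normal_right.1 hx
    refine ⟨n, ?_, r, hr, rfl⟩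
    have h1 := (mem_normalizer_iff.1 hn z).1 (mem_zpowers z)
    exact mul_inv_eq_iff_eq_mul.1 (eq_of_mem_zpowers_two (by rw [hconj, hz]) hz h1)
  rw [eq_top_iff]
  intro x _
  obtain ⟨n, hn, r, hr, hx⟩ := key (g⁻¹ * x * g)
  have hx' : x = g * n * g⁻¹ * (g * r * g⁻¹) := by
    have : x = g * (g⁻¹ * x * g) * g⁻¹ := by group
    rw [this, ← hx]; group
  rw [hx']
  refine mul_mem (mem_sup_left ?_) (mem_sup_right (hR.normal.conj_mem r hr g))
  rw [mem_centralizer_singleton_iff, ← hgt]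
  have := hn.map (MulAut.conj g).toMonoidHom
  exact this.eq

end

section
open Subgroup
variable {G : Type u} [Group G] [Finite G]

lemma not_dvd_pgroup {p q : ℕ} (hp : p.Prime) (hq : q.Prime) (hne : q ≠ p) {S : Subgroup G}
    (hS : IsPGroup p S) : ¬ q ∣ Nat.card S := by
  have := Fact.mk hp
  obtain ⟨n, hn⟩ := IsPGroup.iff_card.1 hS
  rw [hn]
  intro hd
  exact hne ((Nat.prime_dvd_prime_iff_eq hq hp).1 (hq.dvd_of_dvd_pow hd))

lemma exists_pow_prime_ord {p k : ℕ} (hp : p.Prime) {s : G} (hk : orderOf s = p ^ k)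
    (h1 : s ≠ 1) : ∃ m, orderOf (s ^ m) = p := by
  rcases k with _ | k
  · rw [pow_zero, orderOf_eq_one_iff] at hk; exact absurd hk h1
  · refine ⟨p ^ k, ?_⟩
    have h0 := hp.pos
    rw [orderOf_pow_of_dvd (by positivity) (by rw [hk]; exact pow_dvd_pow p (Nat.le_succ k)), hk,
      pow_succ, Nat.mul_div_cancel_left _ (by positivity)]

lemma IsPGroup.exists_orderOf {p : ℕ} (hp : p.Prime) {S : Subgroup G} (hS : IsPGroup p S) {s : G}
    (hs : s ∈ S) : ∃ k, orderOf s = p ^ k := by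
  obtain ⟨k, hk⟩ := hS ⟨s, hs⟩
  have hk : s ^ p ^ k = 1 := congrArg Subtype.val hk
  obtain ⟨j, -, hj⟩ := (Nat.dvd_prime_pow hp).1 (orderOf_dvd_of_pow_eq_one hk)
  exact ⟨j, hj⟩

lemma not_dvd_two_of {r : ℕ} (hr : r.Prime) (hr' : r ≠ 2) : ¬ r ∣ 3 - 1 := fun hd =>
  hr' ((Nat.prime_dvd_prime_iff_eq hr Nat.prime_two).1 hd)

/-- fixed-point-freeness passes to quotients -/
lemma fpf_quot {S N : Subgroup G} [N.Normal] {h : G} (hn : ∀ s ∈ S, h * s * h⁻¹ ∈ S)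
    (hC : ∀ s ∈ S, h * s * h⁻¹ = s → s = 1) {s : G} (hs : s ∈ S)
    (hsN : s⁻¹ * (h * s * h⁻¹) ∈ N) : s ∈ N := by
  let φ : ↥(S ⊓ N) → ↥(S ⊓ N) := fun x => ⟨(x : G)⁻¹ * (h * x * h⁻¹),
    S.mul_mem (S.inv_mem x.2.1) (hn _ x.2.1),
    N.mul_mem (N.inv_mem x.2.2) (Normal.conj_mem inferInstance _ x.2.2 h)⟩
  have key : ∀ x ∈ S, ∀ y ∈ S, x⁻¹ * (h * x * h⁻¹) = y⁻¹ * (h * y * h⁻¹) → x = y := by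
    intro x hx y hy hxy
    have h1 := hC (y * x⁻¹) (mul_mem hy (inv_mem hx)) (by
      have e1 : h * (y * x⁻¹) * h⁻¹ = y * (y⁻¹ * (h * y * h⁻¹)) * (x * (x⁻¹ * (h * x * h⁻¹)))⁻¹ := by
        group
      rw [e1, hxy]; group)
    rw [mul_inv_eq_one] at h1
    exact h1.symm
  have hinj : Function.Injective φ := fun x y hxy =>
    Subtype.ext (key x x.2.1 y y.2.1 (congrArg Subtype.val hxy))
  obtain ⟨x, hx⟩ := Finite.surjective_of_injective hinj
    ⟨_, S.mul_mem (S.inv_mem hs) (hn s hs), hsN⟩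
  rw [← key x x.2.1 s hs (congrArg Subtype.val hx)]
  exact x.2.2

lemma L6 (hG : PS G) (hs : ¬ Group.IsSolvable G) {R : Subgroup G} (hR : IsRad R) {r : ℕ}
    (hr : r.Prime) (hr' : r ∉ ({2, 3, 5} : Set ℕ)) (hd : r ∣ Nat.card G)
    (hn : ¬ HasOrd G (3 * r)) {S : Subgroup G} (hS : IsPGroup 2 S) {h : G} (hh : orderOf h = 3)
    (hnorm : ∀ s ∈ S, h * s * h⁻¹ ∈ S) (hC : ∀ s ∈ S, h * s * h⁻¹ = s → s = 1) : S ≤ R := by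
  have h3 : Nat.Prime 3 := Nat.prime_three
  have hr2 : r ≠ 2 := fun h => hr' (Or.inl h)
  have hr3 : r ≠ 3 := fun h => hr' (Or.inr (Or.inl h))
  have hr13 := rank1_of_adj hG hs hr hr' hd (Or.inr (Or.inl rfl)) hn
  obtain ⟨N, hN, hXN, M, hM, hc⟩ := chiefPS hG {3, r} (by rintro x (rfl | rfl) <;> assumption)
    ⟨r, Or.inr rfl, hd⟩
  have h3N := hXN 3 (Or.inl rfl)
  have hrN := hXN r (Or.inr rfl)
  have hn' : ¬ HasOrd (G ⧸ N) (3 * r) := fun h => hn h.of_quot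
  have hmk3 : ∀ g : G, orderOf g = 3 → orderOf (QuotientGroup.mk' N g) = 3 := fun g hg =>
    orderOf_map_prime h3 hg _ fun h1 =>
      h3N (dvd_card_of_mem ((QuotientGroup.eq_one_iff g).1 h1) hg)
  rcases hc with ⟨⟨T, hT⟩, -⟩ | ⟨s, rfl | rfl, hV⟩
  · exact absurd (hT.hasOrd hM hr hr' (Or.inr (Or.inl rfl)) (card_quot_dvd hr N hd hrN)) hn'
  · exfalso
    have hU : (M.comap (QuotientGroup.mk' N)).Normal := inferInstance
    refine hn (frattini2 h3 hr hr3.symm hr13 (M.comap (QuotientGroup.mk' N)) ?_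
      (card_quot_dvd hr _ hd ?_) (not_dvd_two_of hr hr2))
    · rw [card_comap_mk]; exact (hV.dvd h3).mul_right _
    · rw [card_comap_mk, hr.dvd_mul]
      push Not
      exact ⟨hV.not_dvd h3 hr hr3, hrN⟩
  · let J : Subgroup G := (centralizer (M : Set (G ⧸ N))).comap (QuotientGroup.mk' N)
    have hJn : J.Normal := inferInstance
    have hJ3 : ¬ 3 ∣ Nat.card J := by
      intro h3J
      obtain ⟨g, hg⟩ := exists_ord h3 h3J
      rw [← orderOf_coe] at hg
      obtain ⟨v, hv, hvo⟩ := hV.exists_ord hr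
      have hgJ : QuotientGroup.mk' N (g : G) ∈ centralizer (M : Set (G ⧸ N)) := g.2
      exact hn' (HasOrd.of_commute h3 hr hr3.symm (hmk3 _ hg) hvo
        (mem_centralizer_iff.1 hgJ v hv).symm)
    have hJs : Group.IsSolvable J := (hG.normal J).sol_of_not_dvd (Or.inr (Or.inl rfl)) hJ3
    refine le_trans ?_ (hR.max J hJn hJs)
    intro x hx
    show QuotientGroup.mk' N x ∈ centralizer (M : Set (G ⧸ N))
    rw [mem_centralizer_iff]
    intro v hv
    have hp := hV.partition hr h3 hr3 (fun h => hn' h.symm) (S.map (QuotientGroup.mk' N))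
      (not_dvd_pgroup Nat.prime_two hr hr2 (hS.map _)) (hmk3 _ hh)
      (by
        rintro _ ⟨s, hs, rfl⟩
        exact ⟨_, hnorm s hs, by simp⟩)
      (by
        rintro _ ⟨s, hs, rfl⟩ h1
        refine (QuotientGroup.eq_one_iff s).2 (fpf_quot hnorm hC hs ?_)
        rw [← QuotientGroup.eq_one_iff]
        rw [← map_inv, ← map_mul, ← map_mul] at h1
        have h2 : (QuotientGroup.mk' N) (s⁻¹ * (h * s * h⁻¹)) = 1 := by
          rw [map_mul, h1, map_inv, inv_mul_cancel]
        exact h2) (s := QuotientGroup.mk' N x) ⟨x, hx, rfl⟩ hv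
    exact hp.symm

def NAdj (G : Type u) [Group G] (a b : ℕ) : Prop :=
  a.Prime ∧ b.Prime ∧ a ≠ b ∧ a ∣ Nat.card G ∧ b ∣ Nat.card G ∧ ¬ HasOrd G (a * b)

lemma NAdj.symm {a b : ℕ} (h : NAdj G a b) : NAdj G b a :=
  ⟨h.2.1, h.1, h.2.2.1.symm, h.2.2.2.2.1, h.2.2.2.1, fun h1 => h.2.2.2.2.2 h1.symm⟩

lemma color_aux (hG : PS G) {b : ℕ} (hs : ¬ Group.IsSolvable G) (hb : b.Prime) (h3b : 3 ≠ b)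
    (hbd : b ∣ Nat.card G) (h3 : Rank1 3 G) (hbn : ¬ b ∣ Nat.card (commutator G)) :
    HasOrd G (3 * b) := by
  refine frattini2 Nat.prime_three hb h3b h3 (commutator G)
    (hG.dvd_commutator hs (Or.inr (Or.inl rfl))) (card_quot_dvd hb _ hbd hbn)
    (not_dvd_two_of hb ?_)
  rintro rfl
  exact hbn (hG.dvd_commutator hs (Or.inl rfl))

open Classical in
lemma color (hG : PS G) : ∃ c : ℕ → Fin 3, ∀ a b, NAdj G a b → c a ≠ c b := by
  refine ⟨fun p => if ¬ Rank1 p G then 0 else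
    if (¬ p ∣ Nat.card (commutator G)) ∨ (¬ Group.IsSolvable G ∧ p = 3) then 1 else 2, ?_⟩
  rintro a b ⟨ha, hb, hne, had, hbd, hn⟩ heq
  dsimp only at heq
  have hn2 : ¬ HasOrd G (b * a) := fun h => hn h.symm
  by_cases h1 : ¬ Rank1 a G
  · rw [if_pos h1] at heq
    by_cases h2 : ¬ Rank1 b G
    · exact hn (L1 hG ha hb hne h1 h2)
    · rw [if_neg h2] at heq
      split_ifs at heq <;> exact absurd heq (by decide)
  rw [if_neg h1] at heq
  by_cases h2 : ¬ Rank1 b G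
  · rw [if_pos h2] at heq
    split_ifs at heq <;> exact absurd heq (by decide)
  rw [if_neg h2] at heq
  push Not at h1 h2
  split_ifs at heq with h3 h4 h4
  · rcases h3 with h3 | ⟨hs, rfl⟩
    · rcases h4 with h4 | ⟨hs, rfl⟩
      · exact hn (ord_abelianization ha hb hne had hbd h3 h4)
      · exact hn2 (color_aux hG hs ha hne.symm had h2 h3)
    · rcases h4 with h4 | ⟨hs, rfl⟩
      · exact hn (color_aux hG hs hb hne hbd h1 h4)
      · exact hne rfl
  · exact absurd heq (by decide)
  · exact absurd heq (by decide)
  · push Not at h3 h4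
    by_cases hs : Group.IsSolvable G
    · exact hn (L2 hG ha hb hne h1 h2 h3.1 h4.1 (Or.inl hs))
    by_cases ha' : a ∈ ({2, 3, 5} : Set ℕ)
    · by_cases hb' : b ∈ ({2, 3, 5} : Set ℕ)
      · have ha3 := h3.2 hs
        have hb3 := h4.2 hs
        rcases ha' with rfl | rfl | rfl
        · rcases hb' with rfl | rfl | rfl
          · exact hne rfl
          · exact hb3 rfl
          · exact hn (L2a hG hs h1 (Or.inr rfl))
        · exact ha3 rfl
        · rcases hb' with rfl | rfl | rfl
          · exact hn2 (L2a hG hs h2 (Or.inr rfl))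
          · exact hb3 rfl
          · exact hne rfl
      · exact hn2 (L2 hG hb ha hne.symm h2 h1 h4.1 h3.1 (Or.inr hb'))
    · exact hn (L2 hG ha hb hne h1 h2 h3.1 h4.1 (Or.inr ha'))

lemma core1 {p q r : ℕ} (hp : p.Prime) (hq : q.Prime) (hr : r.Prime) (hpq : p ≠ q) (hpr : p ≠ r)
    (hqr : q ≠ r) {V : Subgroup G} (hV : ElemP p V) (hrq : Rank1 q G)
    (hqd : q ∣ Nat.card (commutator G)) (hrd : ¬ r ∣ Nat.card (commutator G))
    (hrG : r ∣ Nat.card G) (npq : ¬ HasOrd G (p * q)) (npr : ¬ HasOrd G (p * r))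
    (nqr : ¬ HasOrd G (q * r)) : False := by
  obtain ⟨z, hz, hzo, hsup⟩ := fratt0 hq hrq (commutator G) hqd
  obtain ⟨n, hn, hno⟩ := frattini_norm hr (commutator G) _ hsup (card_quot_dvd hr _ hrG hrd)
  obtain ⟨v, hv, hvo⟩ := hV.exists_ord hp
  have hcz : Nat.card (zpowers z) = q := by rw [Nat.card_zpowers, hzo]
  have := hV.partition hp hr hpr npr (zpowers z)
    (by rw [hcz]; exact fun h => hpq ((Nat.prime_dvd_prime_iff_eq hp hq).1 h)) hno
    (fun s hs => (mem_normalizer_iff.1 hn s).1 hs)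
    (fun s hs h => by
      by_contra h1
      have hsq : s ^ q = 1 := by
        obtain ⟨k, rfl⟩ := hs
        show (z ^ k) ^ q = 1
        rw [← zpow_natCast, ← zpow_mul, mul_comm, zpow_mul, zpow_natCast, ← hzo,
          pow_orderOf_eq_one, one_zpow]
      exact nqr (HasOrd.of_commute hq hr hqr (orderOf_prime_of hq hsq h1) hno
        (mul_inv_eq_iff_eq_mul.1 h).symm)) (mem_zpowers z) hv
  exact npq (HasOrd.of_commute hp hq hpq hvo hzo this.symm)

lemma core (hG : PS G) {p q r : ℕ} (hp : p.Prime) (hq : q.Prime) (hr : r.Prime) (hpq : p ≠ q)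
    (hpr : p ≠ r) (hqr : q ≠ r) {V : Subgroup G} (hV : ElemP p V) (hqG : q ∣ Nat.card G)
    (hrG : r ∣ Nat.card G) (npq : ¬ HasOrd G (p * q)) (npr : ¬ HasOrd G (p * r))
    (nqr : ¬ HasOrd G (q * r)) : ¬ Group.IsSolvable G ∧ (q = 3 ∧ r = 5 ∨ q = 5 ∧ r = 3) := by
  have hrq := hV.rank1 hp hq hpq npq
  have hrr := hV.rank1 hp hr hpr npr
  have nrq : ¬ HasOrd G (r * q) := fun h => nqr h.symm
  by_cases h1 : q ∣ Nat.card (commutator G)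
  · by_cases h2 : r ∣ Nat.card (commutator G)
    · by_cases hs : Group.IsSolvable G
      · exact absurd (L2 hG hq hr hqr hrq hrr h1 h2 (Or.inl hs)) nqr
      by_cases hq' : q ∈ ({2, 3, 5} : Set ℕ)
      · by_cases hr' : r ∈ ({2, 3, 5} : Set ℕ)
        · refine ⟨hs, ?_⟩
          rcases hq' with rfl | hq'
          · exact absurd (L2a hG hs hrq (hr'.resolve_left hqr.symm)) nqr
          rcases hr' with rfl | hr'
          · exact absurd (L2a hG hs hrr hq') nrq
          rcases hq' with rfl | rfl <;> rcases hr' with rfl | rfl <;> simp_all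
        · exact absurd (L2 hG hr hq hqr.symm hrr hrq h2 h1 (Or.inr hr')) nrq
      · exact absurd (L2 hG hq hr hqr hrq hrr h1 h2 (Or.inr hq')) nqr
    · exact (core1 hp hq hr hpq hpr hqr hV hrq h1 h2 hrG npq npr nqr).elim
  · by_cases h2 : r ∣ Nat.card (commutator G)
    · exact (core1 hp hr hq hpr hpq hqr.symm hV hrr h2 h1 hqG npr npq nrq).elim
    · exact absurd (ord_abelianization hq hr hqr hqG hrG h1 h2) nqr

lemma tri (hG : PS G) {p q r : ℕ} (apq : NAdj G p q) (apr : NAdj G p r) (aqr : NAdj G q r) :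
    ¬ Group.IsSolvable G ∧ (p = 3 ∨ q = 3 ∨ r = 3) ∧ (p = 5 ∨ q = 5 ∨ r = 5) := by
  obtain ⟨hp, hq, hpq, hpd, hqd, npq⟩ := apq
  obtain ⟨-, hr, hpr, -, hrd, npr⟩ := apr
  obtain ⟨-, -, hqr, -, -, nqr⟩ := aqr
  obtain ⟨N, hN, hXN, M, hM, hc⟩ := chiefPS hG {p, q, r}
    (by rintro x (rfl | rfl | rfl) <;> assumption) ⟨p, Or.inl rfl, hpd⟩
  have hp' := card_quot_dvd hp N hpd (hXN p (by simp))
  have hq' := card_quot_dvd hq N hqd (hXN q (by simp))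
  have hr' := card_quot_dvd hr N hrd (hXN r (by simp))
  have npq' : ¬ HasOrd (G ⧸ N) (p * q) := fun h => npq h.of_quot
  have npr' : ¬ HasOrd (G ⧸ N) (p * r) := fun h => npr h.of_quot
  have nqr' : ¬ HasOrd (G ⧸ N) (q * r) := fun h => nqr h.of_quot
  have hsol : ¬ Group.IsSolvable (G ⧸ N) → ¬ Group.IsSolvable G := fun h h1 => h inferInstance
  rcases hc with ⟨⟨T, hT⟩, s, hs, hs', -⟩ | ⟨s, hs, hV⟩
  · have hsG : ¬ Group.IsSolvable (G ⧸ N) := by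
      intro h
      obtain ⟨e⟩ := hT.iso
      have h2 : Group.IsSolvable T := inferInstance
      exact not_sol_A5 (Group.isSolvable_of_surjective (f := e.toMonoidHom) e.surjective)
    refine ⟨hsol hsG, ?_⟩
    have key : ∀ x y : ℕ, y.Prime → y ∣ Nat.card (G ⧸ N) → x ∈ ({2, 3, 5} : Set ℕ) →
        ¬ HasOrd (G ⧸ N) (x * y) → y ∈ ({2, 3, 5} : Set ℕ) := by
      intro x y hy hyd hx h
      by_contra h1
      exact h (hT.hasOrd hM hy h1 hx hyd)
    have hall : p ∈ ({2, 3, 5} : Set ℕ) ∧ q ∈ ({2, 3, 5} : Set ℕ) ∧ r ∈ ({2, 3, 5} : Set ℕ) := by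
      rcases hs with rfl | rfl | rfl
      · exact ⟨hs', key _ _ hq hq' hs' npq', key _ _ hr hr' hs' npr'⟩
      · exact ⟨key _ _ hp hp' hs' (fun h => npq' h.symm), hs', key _ _ hr hr' hs' nqr'⟩
      · exact ⟨key _ _ hp hp' hs' (fun h => npr' h.symm),
          key _ _ hq hq' hs' (fun h => nqr' h.symm), hs'⟩
    simp only [Set.mem_insert_iff, Set.mem_singleton_iff] at hall
    omega
  · rcases hs with rfl | rfl | rfl
    · have := core (hG.quot N) hp hq hr hpq hpr hqr hV hq' hr' npq' npr' nqr'
      exact ⟨hsol this.1, by omega⟩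
    · have := core (hG.quot N) hq hp hr hpq.symm hqr hpr hV hp' hr' (fun h => npq' h.symm) nqr' npr'
      exact ⟨hsol this.1, by omega⟩
    · have := core (hG.quot N) hr hp hq hpr.symm hqr.symm hpq hV hp' hq' (fun h => npr' h.symm)
        (fun h => nqr' h.symm) npq'
      exact ⟨hsol this.1, by omega⟩

lemma S3a (hG : PS G) (hs : ¬ Group.IsSolvable G) {r : ℕ} (hr' : r ∉ ({2, 3, 5} : Set ℕ))
    (h6 : ¬ HasOrd G (2 * 3)) : ¬ NAdj G r 2 := by
  intro h
  have := rank1_of_adj hG hs h.1 hr' h.2.2.2.1 (Or.inl rfl) h.symm.2.2.2.2.2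
  exact h6 (L2a hG hs this (Or.inl rfl))

lemma S3b (hG : PS G) (hs : ¬ Group.IsSolvable G) {r : ℕ} (hr' : r ∉ ({2, 3, 5} : Set ℕ))
    (h6 : ¬ HasOrd G (2 * 3)) : ¬ NAdj G r 3 := by
  intro h
  obtain ⟨R, hR⟩ := exists_rad (G := G)
  obtain ⟨S, x, s1, s2, hT⟩ := lemmaT hG hs hR
  obtain ⟨k, hk⟩ := hT.ord
  obtain ⟨m, hm⟩ := exists_pow_prime_ord Nat.prime_three hk (fun h => hT.hR (h ▸ one_mem R))
  have hn : x ^ m ∈ normalizer (S : Set G) := pow_mem (mem_normalizer_of_conj hT.norm) m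
  refine hT.n1 (L6 hG hs hR h.1 hr' h.2.2.2.1 h.symm.2.2.2.2.2 hT.two hm
    (fun s hs => (mem_normalizer_iff.1 hn s).1 hs) ?_ hT.m1)
  intro s hs hc
  by_contra h1
  obtain ⟨j, hj⟩ := hT.two.exists_orderOf Nat.prime_two hs
  obtain ⟨i, hi⟩ := exists_pow_prime_ord Nat.prime_two hj h1
  have hc' : Commute (x ^ m) s := mul_inv_eq_iff_eq_mul.1 hc
  exact h6 (HasOrd.of_commute Nat.prime_two Nat.prime_three (by norm_num) hi hm
    (hc'.pow_right i).symm)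

end

def d3 : A5 := ⟨Equiv.swap 2 3 * Equiv.swap 3 4, by rw [Equiv.Perm.mem_alternatingGroup]; decide⟩
lemma d3_cube : d3 ^ 3 = 1 := by decide
lemma d3_ne : d3 ≠ 1 := by decide
lemma cd_five : (c3 * d3) ^ 5 = 1 := by decide
lemma cd_ne : c3 * d3 ≠ 1 := by decide
set_option maxRecDepth 20000 in
lemma cd_cube : ((c3 * d3) ^ 2 * (c3 * (c3 * d3) * c3⁻¹)) ^ 3 = 1 := by decide
lemma cd_cube_ne : (c3 * d3) ^ 2 * (c3 * (c3 * d3) * c3⁻¹) ≠ 1 := by decide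

section
open Subgroup
variable {G : Type u} [Group G]

lemma fix_invariant {r : ℕ} (hr : r.Prime) (hr5 : r ≠ 5) {W : Type*} [AddCommGroup W]
    [Module (ZMod r) W] (ρ : G →* Module.End (ZMod r) W) {a b x : G} {m : ℕ}
    (ha : ρ 1 + ρ a + ρ (a * a) = 0) (hb : ρ 1 + ρ b + ρ (b * b) = 0) (hx : x = (a * b) ^ m)
    (hx5 : x ^ 5 = 1) {u : W} (hu : ρ x u = u) : ρ x (ρ a u) = ρ a u := by
  have hF : Fact r.Prime := ⟨hr⟩
  set g := a * b with hg
  have mulv : ∀ (s t : G) (w : W), ρ (s * t) w = ρ s (ρ t w) := fun s t w => by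
    rw [map_mul]; rfl
  have hinv : ρ a⁻¹ = - ρ 1 - ρ a := by
    have h1 := congrArg (fun z => ρ a⁻¹ * z) ha
    simp only [mul_add, ← map_mul, mul_one, inv_mul_cancel, inv_mul_cancel_left, mul_zero] at h1
    rw [add_assoc] at h1
    rw [eq_neg_of_add_eq_zero_left h1]; abel
  have hid : ρ (g * a * g) = ρ g + ρ a - ρ (g * g) := by
    have h1 := congrArg (fun z => ρ a * z) hb
    simp only [mul_add, ← map_mul, mul_one, mul_zero] at h1
    have e1 : a * (b * b) = g * a⁻¹ * g := by rw [hg]; group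
    have e2 : ρ (g * a⁻¹ * g) = ρ g * ρ a⁻¹ * ρ g := by rw [map_mul, map_mul]
    rw [e1, ← hg, e2, hinv] at h1
    simp only [mul_sub, sub_mul, mul_neg, neg_mul, ← map_mul, mul_one] at h1
    have h2 : ρ (g * a * g) = ρ a + ρ g + (-ρ (g * g) - ρ (g * a * g)) + ρ (g * a * g) - 0 +
      (ρ (g * a * g) - ρ (g * a * g)) := by
      rw [h1]; abel
    rw [h2]; abel
  have hcom : Commute x g := by rw [hx]; exact (Commute.refl g).pow_left m
  have hFg : ∀ w, ρ x w = w → ρ x (ρ g w) = ρ g w := by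
    intro w hw
    rw [← mulv, hcom.eq, mulv, hw]
  have hFgi : ∀ w, ρ x w = w → ρ x (ρ g⁻¹ w) = ρ g⁻¹ w := by
    intro w hw
    rw [← mulv, hcom.inv_right.eq, mulv, hw]
  have step : ∀ w, ρ x w = w → ρ g (ρ a w) = ρ a (ρ g⁻¹ w) + (w - ρ g w) := by
    intro w hw
    have h1 := congrArg (fun z : Module.End (ZMod r) W => z (ρ g⁻¹ w)) hid
    simp only [LinearMap.sub_apply, LinearMap.add_apply, ← mulv] at h1
    rw [mul_inv_cancel_right, mul_inv_cancel, mul_inv_cancel_right, map_one] at h1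
    rw [← mulv, ← mulv, h1]
    simp only [Module.End.one_apply]
    abel
  have main : ∀ k : ℕ, ∀ w, ρ x w = w →
      ∃ u', ρ x u' = u' ∧ ρ (g ^ k) (ρ a w) = ρ a (ρ (g ^ k)⁻¹ w) + u' := by
    intro k
    induction k with
    | zero => intro w hw; exact ⟨0, map_zero _, by simp⟩
    | succ k ih =>
      intro w hw
      have hw1 := hFgi w hw
      obtain ⟨u1, hu1, h1⟩ := ih _ hw1
      have hs := step w hw
      refine ⟨u1 + ρ (g ^ k) (w - ρ g w), ?_, ?_⟩
      · have hk : Commute x (g ^ k) := hcom.pow_right k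
        rw [map_add, hu1, ← mulv, hk.eq, mulv, map_sub, hw, hFg w hw]
      · have e3 : (g ^ (k + 1))⁻¹ = (g ^ k)⁻¹ * g⁻¹ := by rw [pow_succ', mul_inv_rev]
        rw [e3, mulv (g ^ k)⁻¹ g⁻¹, pow_succ, mulv, hs, map_add, h1]
        abel
  obtain ⟨u', hu', h1⟩ := main m u hu
  have hxi : ρ x⁻¹ u = u := by
    conv_lhs => rw [← hu]
    rw [← mulv, inv_mul_cancel, map_one]; rfl
  rw [← hx, hxi] at h1
  have h5 : ∀ n : ℕ, ρ (x ^ n) (ρ a u) = ρ a u + n • u' := by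
    intro n
    induction n with
    | zero => simp
    | succ n ih => rw [pow_succ', mulv, ih, map_add, h1, map_nsmul, hu', succ_nsmul']; abel
  have h6 := h5 5
  rw [hx5, map_one, Module.End.one_apply, left_eq_add] at h6
  have h7 : (5 : ZMod r) • u' = 0 := by
    rw [← h6, ← Nat.cast_smul_eq_nsmul (ZMod r)]; norm_num
  have h8 : (5 : ZMod r) ≠ 0 := by
    intro h
    have : ((5 : ℕ) : ZMod r) = 0 := by exact_mod_cast h
    rw [ZMod.natCast_eq_zero_iff] at this
    exact hr5 ((Nat.prime_dvd_prime_iff_eq hr Nat.prime_five).1 this)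
  rw [h1, (smul_eq_zero.1 h7).resolve_left h8, add_zero]

lemma S4a [Finite G] (hG : PS G) (hs : ¬ Group.IsSolvable G) {r : ℕ}
    (hr' : r ∉ ({2, 3, 5} : Set ℕ)) (h5r : Rank1 5 G) (h15 : ¬ HasOrd G (3 * 5))
    (h3 : NAdj G r 3) : NAdj G r 5 := by
  obtain ⟨hr, -, hr3, hrd, h3d, hn3⟩ := h3
  have hr5 : r ≠ 5 := fun h => hr' (Or.inr (Or.inr h))
  have hr2 : r ≠ 2 := fun h => hr' (Or.inl h)
  have p3 := Nat.prime_three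
  have p5 := Nat.prime_five
  have hn3' : ¬ HasOrd G (3 * r) := fun h => hn3 h.symm
  have h3r := rank1_of_adj hG hs hr hr' hrd (Or.inr (Or.inl rfl)) hn3'
  refine ⟨hr, p5, hr5, hrd, hG.dvd hs (by simp), ?_⟩
  rintro ⟨k, hk⟩
  have hy : orderOf (k ^ 5) = r := by
    rw [orderOf_pow_of_dvd (by norm_num) (hk ▸ dvd_mul_left 5 r), hk, Nat.mul_div_cancel _ (by norm_num)]
  have hx : orderOf (k ^ r) = 5 := by
    rw [orderOf_pow_of_dvd hr.ne_zero (hk ▸ dvd_mul_right r 5), hk, Nat.mul_div_cancel_left _ hr.pos]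
  have hxy : Commute (k ^ r) (k ^ 5) := (Commute.refl k).pow_pow r 5
  set y := k ^ 5
  set x := k ^ r
  -- the radical
  obtain ⟨R, hR⟩ := exists_rad (G := G)
  have hRn := hR.normal
  have h3R : ¬ 3 ∣ Nat.card R := fun h =>
    h15 (frattRad hG hs hR p3 (by simp) (by norm_num) h3r h)
  have h5R : ¬ 5 ∣ Nat.card R := fun h =>
    h15 (frattRad hG hs hR p5 (q := 3) (by simp) (by norm_num) h5r h).symm
  -- the chief factor
  obtain ⟨N, hN, hyN, M, hM, hyM⟩ := chief (fun N : Subgroup G => y ∉ N)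
    (fun h => ne_one_of_ord hr hy (mem_bot.1 h)) (fun h => h (mem_top y))
  push Not at hyM
  have hyM : QuotientGroup.mk' N y ∈ M := hyM
  have hy1 : QuotientGroup.mk' N y ≠ 1 := fun h => hyN ((QuotientGroup.eq_one_iff y).1 h)
  have hyo := orderOf_map_prime hr hy (QuotientGroup.mk' N) hy1
  have hrM := dvd_card_of_mem hyM hyo
  have hV : ElemP r M := by
    refine hM.elemP ?_ hr hrM
    by_contra hMs
    obtain ⟨T, hT⟩ := hM.exists_comp (hG.quot N) hMs
    exact hT.not_dvd hM.normal hr hr' hrM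
  have h3N : ¬ 3 ∣ Nat.card N := fun h =>
    hn3' (frattini2 p3 hr hr3.symm h3r N h (hyo ▸ orderOf_dvd_natCard _) (not_dvd_two_of hr hr2))
  have hF : Fact r.Prime := ⟨hr⟩
  obtain ⟨W, i1, i2, ρ0, e, he, heM, heS, he0, hea, hec⟩ := exists_rep hV
  let ρ : G →* Module.End (ZMod r) W := ρ0.comp (QuotientGroup.mk' N)
  have mulv : ∀ (s t : G) (w : W), ρ (s * t) w = ρ s (ρ t w) := fun s t w => by
    rw [map_mul]; rfl
  have h3sum : ∀ a : G, orderOf a = 3 → ρ 1 + ρ a + ρ (a * a) = 0 := by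
    intro a ha
    have h1 := orderOf_map_prime p3 ha (QuotientGroup.mk' N) fun h1 =>
      h3N (dvd_card_of_mem ((QuotientGroup.eq_one_iff a).1 h1) ha)
    have h2 := sum_eq_zero_of_fix hr p3 hr3 ρ0 e he he0 (fun w => hV.exp _ (heM w)) hec
      (fun h => hn3 h.of_quot) h1
    rw [Finset.sum_range_succ, Finset.sum_range_succ, Finset.sum_range_one] at h2
    rw [map_mul, map_one]
    show (1 : Module.End (ZMod r) W) + ρ0 (QuotientGroup.mk' N a) +
      ρ0 (QuotientGroup.mk' N a) * ρ0 (QuotientGroup.mk' N a) = 0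
    rw [pow_zero, pow_one, pow_two] at h2
    simpa only [map_one, map_mul] using h2
  -- lifts
  obtain ⟨M', T, hM', hT⟩ := hR.exists_comp hG hs
  obtain ⟨e5⟩ := hT.iso
  let ι : A5 →* G ⧸ R := T.subtype.comp e5.symm.toMonoidHom
  have hι : Function.Injective ι := T.subtype_injective.comp e5.symm.injective
  have hker : (QuotientGroup.mk' R).ker = R := QuotientGroup.ker_mk' R
  have lift3 : ∀ c : A5, c ^ 3 = 1 → c ≠ 1 → ∃ a : G, orderOf a = 3 ∧ QuotientGroup.mk' R a = ι c := by
    intro c hc hc1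
    obtain ⟨a0, ha0⟩ := QuotientGroup.mk'_surjective R (ι c)
    obtain ⟨a, ha, ha', -⟩ := lift_order (QuotientGroup.mk' R) a0 p3
      (by rw [ha0, orderOf_injective ι hι]; exact orderOf_prime_of p3 hc hc1) (by rwa [hker])
    exact ⟨a, ha, ha'.trans ha0⟩
  obtain ⟨a, ha, hfa⟩ := lift3 c3 c3_cube c3_ne
  obtain ⟨b, hb, hfb⟩ := lift3 d3 d3_cube d3_ne
  obtain ⟨x', hx', hfx', m, hm⟩ := lift_order (QuotientGroup.mk' R) (a * b) p5
    (by rw [map_mul, hfa, hfb, ← map_mul, orderOf_injective ι hι]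
        exact orderOf_prime_of p5 cd_five cd_ne) (by rwa [hker])
  rw [map_mul, hfa, hfb, ← map_mul] at hfx'
  -- fixed vector
  obtain ⟨w, hw⟩ := heS _ hyM
  have hw0 : w ≠ 0 := by rintro rfl; exact hy1 (by rw [← hw, he0])
  have hxw : ρ x w = w := by
    apply he
    show e (ρ0 (QuotientGroup.mk' N x) w) = _
    rw [hec, hw, ← map_mul, hxy.eq, map_mul, mul_inv_cancel_right]
  obtain ⟨j, hj⟩ := conj_rank1 p5 h5r hx hx'
  have hjo : orderOf (j * x * j⁻¹) = 5 := by
    rw [← hx]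
    exact orderOf_injective (MulAut.conj j).toMonoidHom (MulAut.conj j).injective x
  have hj' : x' ∈ zpowers (j * x * j⁻¹) := by
    rw [mem_zpowers_symm p5 hjo hx' hj]; exact mem_zpowers x'
  have hu0 : ρ j w ≠ 0 := by
    intro h
    apply hw0
    have : ρ (j⁻¹ * j) w = w := by rw [inv_mul_cancel, map_one]; rfl
    rw [← this, mulv, h, map_zero]
  have hu : ρ x' (ρ j w) = ρ j w := by
    have h1 : ∀ n : ℕ, ρ ((j * x * j⁻¹) ^ n) (ρ j w) = ρ j w := by
      intro n
      induction n with
      | zero => simp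
      | succ n ih =>
        rw [pow_succ, mulv, ← mulv _ j, inv_mul_cancel_right, mulv, hxw, ih]
    obtain ⟨n, hn⟩ := (isOfFinOrder_of_finite (j * x * j⁻¹)).mem_powers_iff_mem_zpowers.2 hj'
    have hn : (j * x * j⁻¹) ^ n = x' := hn
    rw [← hn, h1]
  set u := ρ j w
  have hinvf : ∀ g : G, ∀ z, ρ g z = z → ρ g⁻¹ z = z := by
    intro g z hz
    conv_lhs => rw [← hz]
    rw [← mulv, inv_mul_cancel, map_one]; rfl
  have key : ∀ z, ρ x' z = z → ρ x' (ρ a z) = ρ a z := fun z hz =>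
    fix_invariant hr hr5 ρ (h3sum a ha) (h3sum b hb) hm (by rw [← hx', pow_orderOf_eq_one]) hz
  have ha3 : a⁻¹ = a * a := by
    have h := pow_orderOf_eq_one a
    rw [ha, pow_succ', pow_two] at h
    exact inv_eq_of_mul_eq_one_right h
  have key2 : ρ x' (ρ a⁻¹ u) = ρ a⁻¹ u := by
    rw [ha3, mulv]; exact key _ (key _ hu)
  have hc : ρ (x' ^ 2 * (a * x' * a⁻¹)) u = u := by
    have h1 : ρ (a * x' * a⁻¹) u = u := by
      rw [mulv, mulv, key2, ← mulv, mul_inv_cancel, map_one]; rfl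
    rw [mulv, h1, pow_two, mulv, hu, hu]
  have hfc : orderOf (QuotientGroup.mk' R (x' ^ 2 * (a * x' * a⁻¹))) = 3 := by
    simp only [map_mul, map_pow, map_inv, hfx', hfa]
    simp only [← map_mul, ← map_pow, ← map_inv]
    rw [orderOf_injective ι hι]
    have h1 := cd_cube
    have h2 := cd_cube_ne
    exact orderOf_prime_of p3 h1 h2
  obtain ⟨n, hn⟩ := exists_pow_ord _ hfc
  set c := x' ^ 2 * (a * x' * a⁻¹)
  have hcn : ρ (c ^ n) u = u := by
    generalize n = n
    induction n with
    | zero => simp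
    | succ n ih => rw [pow_succ, mulv, hc, ih]
  have hfin := congrArg (fun z : Module.End (ZMod r) W => z u) (h3sum _ hn)
  simp only [LinearMap.add_apply, mulv, hcn, map_one, Module.End.one_apply,
    LinearMap.zero_apply] at hfin
  have h7 : (3 : ZMod r) • u = 0 := by
    rw [← hfin, show (3 : ZMod r) = 1 + 1 + 1 by norm_num, add_smul, add_smul, one_smul]
  have h8 : (3 : ZMod r) ≠ 0 := by
    intro h
    have : ((3 : ℕ) : ZMod r) = 0 := by exact_mod_cast h
    rw [ZMod.natCast_eq_zero_iff] at this
    exact hr3 ((Nat.prime_dvd_prime_iff_eq hr p3).1 this)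
  exact hu0 ((smul_eq_zero.1 h7).resolve_left h8)

end

section
open Subgroup
variable {G : Type u} [Group G]

lemma squares_proper {P : Type*} [Group P] [Finite P] (hP : IsPGroup 2 P) [Nontrivial P] :
    ∃ K : Subgroup P, K ≠ ⊤ ∧ ∀ x, x ^ 2 ∈ K := by
  have hF : Fact (Nat.Prime 2) := ⟨Nat.prime_two⟩
  have hnil := hP.isNilpotent
  have hlt : commutator P < ⊤ := Group.IsSolvable.commutator_lt_top_of_nontrivial P
  let f : Abelianization P →* Abelianization P := powMonoidHom 2
  have hni : ¬ Function.Injective f := by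
    intro hi
    obtain ⟨x, hx⟩ : ∃ x : P, x ∉ commutator P := by
      by_contra h
      push Not at h
      exact hlt.ne (eq_top_iff.2 fun x _ => h x)
    obtain ⟨k, hk⟩ := hP x
    have hi2 : ∀ k, Function.Injective (fun y : Abelianization P => y ^ 2 ^ k) := by
      intro k
      induction k with
      | zero => intro a b h; simpa using h
      | succ k ih =>
        intro a b h
        apply ih
        apply hi
        show (a ^ 2 ^ k) ^ 2 = (b ^ 2 ^ k) ^ 2
        rw [← pow_mul, ← pow_mul, ← pow_succ]; exact h
    have h1 : Abelianization.of x = 1 := by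
      apply hi2 k
      show Abelianization.of x ^ 2 ^ k = 1 ^ 2 ^ k
      rw [← map_pow, hk, map_one, one_pow]
    exact hx ((QuotientGroup.eq_one_iff x).1 h1)
  have hns : ¬ Function.Surjective f := fun h => hni (Finite.injective_iff_surjective.2 h)
  refine ⟨f.range.comap Abelianization.of, fun h => hns ?_, fun x => ⟨Abelianization.of x, ?_⟩⟩
  · intro y
    obtain ⟨x, rfl⟩ := QuotientGroup.mk_surjective y
    have : x ∈ f.range.comap Abelianization.of := h ▸ mem_top x
    exact this
  · show Abelianization.of x ^ 2 = _
    rw [map_pow]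

lemma cube_conj {h : G} (h3 : h ^ 3 = 1) {n m : G} (hn : h * n * h⁻¹ = n * m)
    (hm : h * m * h⁻¹ = m) : m ^ 3 = 1 := by
  have e : ∀ k : ℕ, h ^ k * n * (h ^ k)⁻¹ = n * m ^ k := by
    intro k
    induction k with
    | zero => simp
    | succ k ih =>
      have hc : ∀ j : ℕ, h * m ^ j * h⁻¹ = m ^ j := fun j => by rw [← conj_pow, hm]
      calc h ^ (k + 1) * n * (h ^ (k + 1))⁻¹ = h * (h ^ k * n * (h ^ k)⁻¹) * h⁻¹ := by
            rw [pow_succ']; group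
        _ = (h * n * h⁻¹) * (h * m ^ k * h⁻¹) := by rw [ih]; group
        _ = n * m ^ (k + 1) := by rw [hn, hc, pow_succ', mul_assoc]
  have := e 3
  rw [h3] at this
  simpa using this

lemma two_cube [Finite G] {S : Subgroup G} (hS : IsPGroup 2 S) {m : G} (hm : m ∈ S)
    (h3 : m ^ 3 = 1) : m = 1 := by
  obtain ⟨k, hk⟩ := IsPGroup.exists_orderOf Nat.prime_two hS hm
  have h1 := orderOf_dvd_of_pow_eq_one h3
  rw [hk] at h1
  have h2 : Nat.Coprime (2 ^ k) 3 := Nat.Coprime.pow_left k (by norm_num)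
  have h4 : 2 ^ k = 1 := by
    have := Nat.dvd_gcd dvd_rfl h1
    rw [h2.gcd_eq_one] at this
    exact Nat.dvd_one.1 this
  exact orderOf_eq_one_iff.1 (hk.trans h4)

lemma Qd [Finite G] {h : G} (h3 : h ^ 3 = 1) : ∀ (n : ℕ) (S : Subgroup G), Nat.card S = n →
    IsPGroup 2 S → (∀ s ∈ S, h * s * h⁻¹ ∈ S) → (∃ s ∈ S, h * s * h⁻¹ ≠ s) →
    ∃ d ∈ S, d ^ 4 = 1 ∧ h * d * h⁻¹ ≠ d := by
  intro n
  induction n using Nat.strong_induction_on with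
  | _ n ih =>
  intro S hSn hS hnorm hex
  by_cases hmin : ∃ A : Subgroup G, A < S ∧ (∀ s ∈ A, h * s * h⁻¹ ∈ A) ∧ ∃ s ∈ A, h * s * h⁻¹ ≠ s
  · obtain ⟨A, hA, hAn, hAe⟩ := hmin
    obtain ⟨d, hd, h4, h5⟩ := ih (Nat.card A) (by
      rw [← hSn]
      exact Set.ncard_lt_ncard (s := (A : Set G)) (t := (S : Set G)) hA (Set.toFinite _)) A rfl
      (hS.to_le hA.le) hAn hAe
    exact ⟨d, hA.le hd, h4, h5⟩
  push Not at hmin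
  have hmin' : ∀ A : Subgroup G, A ≤ S → (∀ s ∈ A, h * s * h⁻¹ ∈ A) → (∃ s ∈ A, h * s * h⁻¹ ≠ s) →
      A = S := by
    intro A hA hn ⟨s, hs, hs'⟩
    by_contra hne
    exact hs' (hmin A (lt_of_le_of_ne hA hne) hn s hs)
  obtain ⟨s0, hs0, hs0'⟩ := hex
  have hsne : s0 ≠ 1 := by rintro rfl; simp at hs0'
  have hnt : Nontrivial S := ⟨⟨s0, hs0⟩, 1, fun h => hsne (congrArg Subtype.val h)⟩
  obtain ⟨K, hK, hsq⟩ := squares_proper hS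
  let Φ : Subgroup G := closure {x | ∃ s ∈ S, x = s ^ 2}
  have hΦS : Φ ≤ S := (closure_le _).2 (by rintro x ⟨s, hs, rfl⟩; exact S.pow_mem hs 2)
  have hΦK : Φ ≤ K.map S.subtype := (closure_le _).2 (by
    rintro x ⟨s, hs, rfl⟩; exact ⟨⟨s, hs⟩ ^ 2, hsq _, rfl⟩)
  have hΦlt : Φ < S := by
    refine lt_of_le_of_ne hΦS fun hEq => hK (eq_top_iff.2 fun x _ => ?_)
    obtain ⟨y, hy, hyx⟩ := hΦK (by rw [hEq]; exact x.2 : (x : G) ∈ Φ)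
    rwa [← Subtype.ext hyx]
  have hΦc : ∀ g : G, (∀ s ∈ S, g * s * g⁻¹ ∈ S) → ∀ s ∈ Φ, g * s * g⁻¹ ∈ Φ := by
    intro g hg
    have : Φ ≤ Φ.comap (MulAut.conj g).toMonoidHom := (closure_le _).2 (by
      rintro x ⟨s, hs, rfl⟩
      refine subset_closure ⟨g * s * g⁻¹, hg s hs, ?_⟩
      show g * s ^ 2 * g⁻¹ = _
      rw [conj_pow])
    exact fun s hs => this hs
  have hfix : ∀ f ∈ Φ, h * f * h⁻¹ = f := hmin Φ hΦlt (hΦc h hnorm)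
  -- C_S(Φ)
  have hcen : S ⊓ centralizer Φ = S := by
    have hd : ∀ a ∈ S, a⁻¹ * (h * a * h⁻¹) ∈ S ⊓ centralizer Φ := by
      intro a ha
      refine ⟨S.mul_mem (S.inv_mem ha) (hnorm a ha), mem_centralizer_iff.2 fun f hf => ?_⟩
      have h1 := hfix _ (hΦc a (fun s hs => S.mul_mem (S.mul_mem ha hs) (S.inv_mem ha)) f hf)
      have h2 := hfix f hf
      have h5 : h * (a * f * a⁻¹) * h⁻¹ = (h * a * h⁻¹) * (h * f * h⁻¹) * (h * a * h⁻¹)⁻¹ := by group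
      rw [h5, h2] at h1
      rw [mul_inv_eq_iff_eq_mul] at h1
      rw [show a⁻¹ * (h * a * h⁻¹) * f = a⁻¹ * (h * a * h⁻¹ * f) by group, h1]
      group
    apply hmin' _ inf_le_left
    · rintro s ⟨hs, hs'⟩
      refine ⟨hnorm s hs, mem_centralizer_iff.2 fun f hf => ?_⟩
      have h1 := mem_centralizer_iff.1 hs' f hf
      have h2 := hfix f hf
      calc f * (h * s * h⁻¹) = (h * f * h⁻¹) * (h * s * h⁻¹) := by rw [h2]
        _ = h * (f * s) * h⁻¹ := by group
        _ = h * (s * f) * h⁻¹ := by rw [h1]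
        _ = (h * s * h⁻¹) * (h * f * h⁻¹) := by group
        _ = _ := by rw [h2]
    · refine ⟨_, hd s0 hs0, fun hm => ?_⟩
      have h1 := cube_conj h3 (n := s0) (m := s0⁻¹ * (h * s0 * h⁻¹)) (by group) hm
      have h2 := two_cube hS (hd s0 hs0).1 h1
      exact hs0' (inv_mul_eq_one.1 h2).symm
  have hcomm : ∀ a ∈ S, ∀ f ∈ Φ, f * a = a * f := fun a ha f hf =>
    mem_centralizer_iff.1 ((by rw [hcen]; exact ha : a ∈ S ⊓ centralizer Φ).2) f hf
  set b := h * s0 * h⁻¹ with hb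
  have hbS : b ∈ S := hnorm s0 hs0
  have hmS : s0⁻¹ * b ∈ S := S.mul_mem (S.inv_mem hs0) hbS
  refine ⟨s0⁻¹ * b, hmS, ?_, fun hm => ?_⟩
  · have hq : s0 ^ 2 ∈ Φ := subset_closure ⟨s0, hs0, rfl⟩
    have hab : b ^ 2 = s0 ^ 2 := by rw [hb, conj_pow, hfix _ hq]
    have hz : (s0⁻¹ * b) ^ 2 ∈ Φ := subset_closure ⟨_, hmS, rfl⟩
    have hz1 : (b * s0⁻¹) ^ 2 = (s0⁻¹ * b) ^ 2 := by
      have := hcomm s0 hs0 _ hz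
      have h6 : (b * s0⁻¹) ^ 2 = s0 * (s0⁻¹ * b) ^ 2 * s0⁻¹ := by rw [pow_two, pow_two]; group
      rw [h6, ← this, mul_inv_cancel_right]
    have hz2 : (b * s0⁻¹) ^ 2 = ((s0⁻¹ * b) ^ 2)⁻¹ := by
      have e1 : b = b⁻¹ * s0 ^ 2 := by rw [← hab]; group
      have e2 : s0⁻¹ = (s0 ^ 2)⁻¹ * s0 := by group
      have e3 : b * s0⁻¹ = b⁻¹ * s0 := by rw [e2]; nth_rw 1 [e1]; group
      have e4 : (s0⁻¹ * b)⁻¹ = b⁻¹ * s0 := by group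
      rw [← inv_pow, e4, e3]
    rw [show 4 = 2 * 2 from rfl, pow_mul, pow_two, ← hz1]
    nth_rw 1 [hz2]
    rw [hz1, inv_mul_cancel]
  · have h1 := cube_conj h3 (n := s0) (m := s0⁻¹ * b) (by rw [← hb]; group) hm
    have h2 := two_cube hS hmS h1
    exact hs0' (inv_mul_eq_one.1 h2).symm

lemma Q8 [Finite G] (hr : Rank1 2 G) {h : G} (h3 : h ^ 3 = 1) {S : Subgroup G} (hS : IsPGroup 2 S)
    (hnorm : ∀ s ∈ S, h * s * h⁻¹ ∈ S) (hex : ∃ s ∈ S, h * s * h⁻¹ ≠ s) {s : G} (hs : s ∈ S)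
    (hfs : h * s * h⁻¹ = s) : s ^ 2 = 1 := by
  have hF : Fact (Nat.Prime 2) := ⟨Nat.prime_two⟩
  by_contra hs2
  -- unique involution
  have hne : S ≠ ⊥ := by
    rintro rfl
    rw [mem_bot.1 hs] at hs2
    simp at hs2
  obtain ⟨z, hzS, hz, hzu⟩ := exists_unique_ord Nat.prime_two hr hS hne
  have uniq : ∀ x ∈ S, x ^ 2 = 1 → x ≠ 1 → x = z := fun x hx h2 h1 =>
    have ho := orderOf_prime_of Nat.prime_two h2 h1
    eq_of_mem_zpowers_two ho hz (hzu x hx ho)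
  have hzf : h * z * h⁻¹ = z := by
    apply uniq _ (hnorm z hzS)
    · rw [conj_pow, show z ^ 2 = 1 by rw [← hz, pow_orderOf_eq_one]]; group
    · intro h1
      have : z = 1 := by simpa using h1
      rw [this] at hz; simp at hz
  have sqf : ∀ x ∈ S, x ^ 2 = 1 → h * x * h⁻¹ = x := by
    intro x hx h2
    by_cases h1 : x = 1
    · rw [h1]; group
    · rw [uniq x hx h2 h1, hzf]
  -- u of order 4
  obtain ⟨u, hu, hfu, hu2, hu4⟩ : ∃ u ∈ S, h * u * h⁻¹ = u ∧ u ^ 2 ≠ 1 ∧ (u ^ 2) ^ 2 = 1 := by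
    obtain ⟨k, hk⟩ := IsPGroup.exists_orderOf Nat.prime_two hS hs
    have hk2 : 2 ≤ k := by
      by_contra hlt
      apply hs2
      apply orderOf_dvd_iff_pow_eq_one.1
      rw [hk]
      exact (pow_dvd_pow 2 (show k ≤ 1 by omega)).trans (by norm_num)
    obtain ⟨j, rfl⟩ := Nat.exists_eq_add_of_le hk2
    refine ⟨s ^ 2 ^ j, S.pow_mem hs _, by rw [← conj_pow, hfs], ?_, ?_⟩
    · rw [← pow_mul, ← pow_succ]
      intro h1
      have := orderOf_dvd_of_pow_eq_one h1
      rw [hk, Nat.pow_dvd_pow_iff_le_right (by norm_num)] at this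
      omega
    · rw [← pow_mul (s ^ 2 ^ j), ← pow_mul, show 2 ^ j * (2 * 2) = 2 ^ (j + 2) by rw [pow_add]; norm_num]
      rw [← orderOf_dvd_iff_pow_eq_one, hk, add_comm]
  -- fixed points
  let B : Subgroup G := S ⊓ centralizer {h}
  have hBf : ∀ x ∈ S, (x ∈ B ↔ h * x * h⁻¹ = x) := by
    intro x hx
    rw [mul_inv_eq_iff_eq_mul]
    exact ⟨fun hb => mem_centralizer_singleton_iff.1 hb.2 |>.symm,
      fun hb => ⟨hx, mem_centralizer_singleton_iff.2 hb.symm⟩⟩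
  obtain ⟨n, hnS, hnB, hnn⟩ : ∃ n ∈ S, n ∉ B ∧ ∀ b ∈ B, n * b * n⁻¹ ∈ B := by
    have hnil := hS.isNilpotent
    have hlt : B.subgroupOf S < ⊤ := by
      rw [lt_top_iff_ne_top]
      intro h
      obtain ⟨x, hx, hx'⟩ := hex
      exact hx' ((hBf x hx).1 (subgroupOf_eq_top.1 h hx))
    have h1 := Group.normalizerCondition_of_isNilpotent _ hlt
    obtain ⟨n, hn, hn'⟩ := SetLike.exists_of_lt h1
    refine ⟨n, n.2, hn', fun b hb => ?_⟩
    have h2 := (mem_normalizer_iff.1 hn ⟨b, hb.1⟩).1 hb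
    exact h2
  set m := n⁻¹ * (h * n * h⁻¹) with hm
  have hmS : m ∈ S := S.mul_mem (S.inv_mem hnS) (hnorm n hnS)
  have hmu : m * u = u * m := by
    have h1 := (hBf _ (S.mul_mem (S.mul_mem hnS hu) (S.inv_mem hnS))).1 (hnn u ((hBf u hu).2 hfu))
    have h5 : h * (n * u * n⁻¹) * h⁻¹ = (h * n * h⁻¹) * (h * u * h⁻¹) * (h * n * h⁻¹)⁻¹ := by group
    rw [h5, hfu, mul_inv_eq_iff_eq_mul] at h1
    rw [hm, show n⁻¹ * (h * n * h⁻¹) * u = n⁻¹ * (h * n * h⁻¹ * u) by group, h1]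
    group
  have hmf : h * m * h⁻¹ ≠ m := by
    intro hf
    have h1 := cube_conj h3 (n := n) (m := m) (by rw [hm]; group) hf
    have h2 := two_cube hS hmS h1
    exact hnB ((hBf n hnS).2 (inv_mul_eq_one.1 h2).symm)
  obtain ⟨d, ⟨hdS, hdu⟩, hd4, hdf⟩ := Qd h3 _ (S ⊓ centralizer {u}) rfl (hS.to_le inf_le_left)
    (by
      rintro s ⟨hs, hs'⟩
      refine ⟨hnorm s hs, mem_centralizer_singleton_iff.2 ?_⟩
      have h1 := mem_centralizer_singleton_iff.1 hs'
      calc h * s * h⁻¹ * u = h * s * h⁻¹ * (h * u * h⁻¹) := by rw [hfu]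
        _ = h * (s * u) * h⁻¹ := by group
        _ = h * (u * s) * h⁻¹ := by rw [h1]
        _ = h * u * h⁻¹ * (h * s * h⁻¹) := by group
        _ = _ := by rw [hfu])
    ⟨m, ⟨hmS, mem_centralizer_singleton_iff.2 hmu⟩, hmf⟩
  have hdu : Commute d u := mem_centralizer_singleton_iff.1 hdu
  apply hdf
  by_cases hd2 : d ^ 2 = 1
  · exact sqf d hdS hd2
  · have h1 := uniq _ (S.pow_mem hdS 2) (by rw [← pow_mul]; exact hd4) hd2
    have h2 := uniq _ (S.pow_mem hu 2) hu4 hu2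
    have h4 : (d * u⁻¹) ^ 2 = 1 := by
      rw [hdu.inv_right.mul_pow, inv_pow, h1, h2, mul_inv_cancel]
    have h5 := sqf _ (S.mul_mem hdS (S.inv_mem hu)) h4
    have h6 : h * d * h⁻¹ = (h * (d * u⁻¹) * h⁻¹) * (h * u * h⁻¹) := by group
    rw [h6, h5, hfu]; group

end

section
open Subgroup
variable {G : Type u} [Group G] [Finite G]

lemma S4b_core (hG : PS G) (hs : ¬ Group.IsSolvable G) (h2r : Rank1 2 G) (h3r : Rank1 3 G)
    (h15 : ¬ HasOrd G (3 * 5)) {r : ℕ} (hr : r.Prime) (hr' : r ∉ ({2, 3, 5} : Set ℕ))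
    (hd : r ∣ Nat.card G) (hn : ¬ HasOrd G (3 * r)) {t : G} (ht : orderOf t = 2)
    (htc : ∀ x, Commute x t) : False := by
  have hr2 : r ≠ 2 := fun h => hr' (Or.inl h)
  obtain ⟨R, hR⟩ := exists_rad (G := G)
  have hRn := hR.normal
  have h3R : ¬ 3 ∣ Nat.card R := fun h =>
    h15 (frattRad hG hs hR Nat.prime_three (by simp) (by norm_num) h3r h)
  obtain ⟨S, h, s1, s2, hT⟩ := lemmaT hG hs hR
  have h3 : h ^ 3 = 1 := by
    obtain ⟨k, hk⟩ := hT.ord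
    have hpow : ∀ j : ℕ, (h ^ 3) ^ 3 ^ j = 1 → h ^ 3 = 1 := by
      intro j
      induction j with
      | zero => intro h1; simpa using h1
      | succ j ih =>
        intro h1
        apply ih
        apply eq_one_of_mem_p' Nat.prime_three h3R (R.pow_mem hT.cube _)
        rw [← pow_mul, ← pow_succ]; exact h1
    apply hpow k
    rw [← pow_mul, mul_comm, pow_mul, ← hk, pow_orderOf_eq_one, one_pow]
  let Z : Subgroup G := zpowers t
  have hZc : ∀ z ∈ Z, ∀ x : G, Commute x z := by
    rintro z ⟨n, rfl⟩ x
    exact (htc x).zpow_right n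
  have hZn : Z.Normal := ⟨fun z hz g => by rw [(hZc z hz g).eq, mul_inv_cancel_right]; exact hz⟩
  have hZcard : Nat.card Z = 2 := by rw [Nat.card_zpowers, ht]
  have hZsol : Group.IsSolvable Z := by
    have hc : ∀ a b : Z, a * b = b * a := fun a b => Subtype.ext (hZc b b.2 a)
    exact Group.isSolvable_of_comm hc
  have hZ2 : ∀ z ∈ Z, z ^ 2 = 1 := by
    intro z hz
    have := pow_card_eq_one' (x := (⟨z, hz⟩ : Z))
    rw [hZcard] at this
    exact congrArg Subtype.val this
  let D := G ⧸ Z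
  have hD : PS D := hG.quot Z
  have hDs : ¬ Group.IsSolvable D := fun h => hs (sol_of_ext Z hZsol h)
  obtain ⟨R', hR'⟩ := exists_rad (G := D)
  have hR'n := hR'.normal
  have hh : orderOf h = 3 := orderOf_prime_of Nat.prime_three h3 (fun h1 => hT.hR (h1 ▸ R.one_mem))
  have hhZ : h ∉ Z := fun hz => by
    have h1 := hZ2 h hz
    have h2 := orderOf_dvd_of_pow_eq_one h1
    rw [hh] at h2
    norm_num at h2
  let f := QuotientGroup.mk' Z
  have hle : S.map f ≤ R' := by
    refine L6 hD hDs hR' hr hr' (card_quot_dvd hr Z hd ?_) (fun h => hn h.of_quot)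
      (S := S.map f) (hT.two.map f) (h := f h) ?_ ?_ ?_
    · rw [hZcard]
      exact fun h => hr2 ((Nat.prime_dvd_prime_iff_eq hr Nat.prime_two).1 h)
    · exact orderOf_map_prime Nat.prime_three hh f fun h1 => hhZ ((QuotientGroup.eq_one_iff h).1 h1)
    · rintro _ ⟨s, hs, rfl⟩
      exact ⟨_, hT.norm s hs, by simp⟩
    · rintro _ ⟨s, hs, rfl⟩ hfix
      rw [← map_mul, ← map_inv, ← map_mul] at hfix
      have hm : s⁻¹ * (h * s * h⁻¹) ∈ Z := QuotientGroup.eq.1 hfix.symm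
      have hc := (hZc _ hm h).eq
      have hm3 := cube_conj h3 (n := s) (m := s⁻¹ * (h * s * h⁻¹)) (by group)
        (by rw [hc, mul_inv_cancel_right])
      have hm2 := hZ2 _ hm
      have hm1 : s⁻¹ * (h * s * h⁻¹) = 1 := by
        rw [pow_succ, hm2, one_mul] at hm3; exact hm3
      have hsf : h * s * h⁻¹ = s := (inv_mul_eq_one.1 hm1).symm
      have hs2 := Q8 h2r h3 hT.two hT.norm ⟨s1, hT.m1, hT.nc⟩ hs hsf
      refine (QuotientGroup.eq_one_iff s).2 ?_
      by_cases h1 : s = 1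
      · rw [h1]; exact Z.one_mem
      · exact h2r t s ht (orderOf_prime_of Nat.prime_two hs2 h1) (htc s).symm
  have h1 := hR.max _ (hR'n.comap f) (sol_comap Z hZsol R' hR'.sol)
  exact hT.n1 (h1 (hle ⟨s1, hT.m1, rfl⟩))

lemma S4b (hG : PS G) (hs : ¬ Group.IsSolvable G) {r : ℕ}
    (hr' : r ∉ ({2, 3, 5} : Set ℕ)) (h2r : Rank1 2 G) (h15 : ¬ HasOrd G (3 * 5))
    (h3 : NAdj G r 3) : NAdj G r 2 := by
  obtain ⟨hr, -, hr3, hrd, h3d, hn3⟩ := h3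
  have hr2 : r ≠ 2 := fun h => hr' (Or.inl h)
  have hn3' : ¬ HasOrd G (3 * r) := fun h => hn3 h.symm
  have h3r := rank1_of_adj hG hs hr hr' hrd (Or.inr (Or.inl rfl)) hn3'
  refine ⟨hr, Nat.prime_two, hr2, hrd, hG.dvd hs (by simp), ?_⟩
  rintro ⟨k, hk⟩
  have hy : orderOf (k ^ 2) = r := by
    rw [orderOf_pow_of_dvd (by norm_num) (hk ▸ dvd_mul_left 2 r), hk, Nat.mul_div_cancel _ (by norm_num)]
  have hx : orderOf (k ^ r) = 2 := by
    rw [orderOf_pow_of_dvd hr.ne_zero (hk ▸ dvd_mul_right r 2), hk, Nat.mul_div_cancel_left _ hr.pos]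
  have hxy : Commute (k ^ r) (k ^ 2) := (Commute.refl k).pow_pow r 2
  set y := k ^ 2
  set t := k ^ r
  obtain ⟨R, hR⟩ := exists_rad (G := G)
  have hRn := hR.normal
  have hsup := L2b hG hs hR h2r hx
  let C : Subgroup G := centralizer {t}
  let f : C →* G ⧸ R := (QuotientGroup.mk' R).comp C.subtype
  have hf : Function.Surjective f := surj_of_sup C R hsup
  have hker : Group.IsSolvable f.ker := by
    have hRs := hR.sol
    let g : f.ker →* R :=
      { toFun := fun x => ⟨x.1.1, (QuotientGroup.eq_one_iff _).1 x.2⟩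
        map_one' := rfl
        map_mul' := fun _ _ => rfl }
    exact Group.isSolvable_of_isSolvable_injective (f := g) fun a b h =>
      Subtype.ext (Subtype.ext (congrArg (fun z : R => (z : G)) h))
  have hC : PS C := PS.of_ext f.ker (PS.of_sol hker)
    ((hG.quot R).equiv (QuotientGroup.quotientKerEquivOfSurjective f hf).symm)
  have hCs : ¬ Group.IsSolvable C := by
    intro h
    have : Group.IsSolvable (G ⧸ R) := Group.isSolvable_of_surjective hf
    exact hs (sol_of_ext R hR.sol this)
  have hyC : y ∈ C := mem_centralizer_singleton_iff.2 hxy.symm.eq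
  have htC : t ∈ C := mem_centralizer_singleton_iff.2 rfl
  refine S4b_core hC hCs (h2r.sub Nat.prime_two C) (h3r.sub Nat.prime_three C)
    (fun h => h15 h.of_sub) hr hr' (dvd_card_of_mem hyC hy) (fun h => hn3' h.of_sub)
    (t := ⟨t, htC⟩) (by rw [Subgroup.orderOf_mk]; exact hx) ?_
  rintro ⟨x, hx⟩
  exact Subtype.ext (mem_centralizer_singleton_iff.1 hx)

end

section
open Subgroup

lemma IsPseudoSolvable.ps {G : Type u} [Group G] (h : IsPseudoSolvable G) : PS G := by
  obtain ⟨n, H, h0, h1, h2⟩ := h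
  have key : ∀ i : Fin (n + 1), PS (H i) := by
    intro i
    induction i using Fin.induction with
    | zero => rw [h0]; exact PS.of_sol inferInstance
    | succ i ih =>
      obtain ⟨hle, hN, hq⟩ := h2 i
      refine PS.of_ext ((H i.castSucc).subgroupOf (H i.succ))
        (ih.equiv (subgroupOfEquivOfLe hle).symm) ?_
      rcases hq with hc | he
      · exact PS.of_sol (Group.isSolvable_of_comm fun a b => hc.commGroup.mul_comm a b)
      · exact PSI.alt _ _ he
  have h := key (Fin.last n)
  rw [h1] at h
  exact h.equiv topEquiv

end

theorem pseudo_solvable_four_categories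
    (G : Type*) [Group G] [Finite G] (hG : IsPseudoSolvable G) :
    (Cat1 G ∧ ¬ Cat2 G ∧ ¬ Cat3 G ∧ ¬ Cat4 G) ∨
    (¬ Cat1 G ∧ Cat2 G ∧ ¬ Cat3 G ∧ ¬ Cat4 G) ∨
    (¬ Cat1 G ∧ ¬ Cat2 G ∧ Cat3 G ∧ ¬ Cat4 G) ∨
    (¬ Cat1 G ∧ ¬ Cat2 G ∧ ¬ Cat3 G ∧ Cat4 G) := by
  have hP := hG.ps
  have hcol : CompColorable3 G := color hP
  have symm : ∀ {a b : ℕ}, CompAdj G a b → CompAdj G b a := fun h => NAdj.symm h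
  -- consequences of the categories
  have adj2 : Cat2 G → CompAdj G 2 3 ∧ CompAdj G 2 5 ∧ CompAdj G 3 5 ∧ 
      ∀ r : ℕ, r ∉ ({2, 3, 5} : Set ℕ) → ¬ CompAdj G r 3 := by
    rintro ⟨-, d2, d3, d5, n6, n10, n15, h⟩
    exact ⟨⟨Nat.prime_two, Nat.prime_three, by norm_num, d2, d3, n6⟩,
      ⟨Nat.prime_two, Nat.prime_five, by norm_num, d2, d5, n10⟩,
      ⟨Nat.prime_three, Nat.prime_five, by norm_num, d3, d5, n15⟩,
      fun r hr ha => (h r ha.1 ha.2.2.2.1 hr).2 ha⟩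
  have adjp : (∃ p : ℕ, p.Prime ∧ p ∉ ({2, 3, 5} : Set ℕ) ∧ p ∣ Nat.card G ∧
      3 ∣ Nat.card G ∧ 5 ∣ Nat.card G ∧
      (¬ ∃ g : G, orderOf g = 3 * p) ∧ (¬ ∃ g : G, orderOf g = 5 * p) ∧
      (¬ ∃ g : G, orderOf g = 15)) ↔ ∃ p : ℕ, p ∉ ({2, 3, 5} : Set ℕ) ∧ CompAdj G p 3 ∧
        CompAdj G p 5 ∧ CompAdj G 3 5 := by
    constructor
    · rintro ⟨p, hp, hp', dp, d3, d5, n3, n5, n15⟩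
      refine ⟨p, hp', symm ⟨Nat.prime_three, hp, ?_, d3, dp, n3⟩,
        symm ⟨Nat.prime_five, hp, ?_, d5, dp, n5⟩,
        ⟨Nat.prime_three, Nat.prime_five, by norm_num, d3, d5, n15⟩⟩
      · rintro rfl; simp at hp'
      · rintro rfl; simp at hp'
    · rintro ⟨p, hp', h3, h5, h35⟩
      exact ⟨p, h3.1, hp', h3.2.2.2.1, h35.2.2.2.1, h35.2.2.2.2.1, (symm h3).2.2.2.2.2,
        (symm h5).2.2.2.2.2, h35.2.2.2.2.2⟩
  have e12 : Cat2 G → ¬ Cat1 G := fun h2 h1 =>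
    h1.2 ⟨2, 3, 5, (adj2 h2).1, (adj2 h2).2.1, (adj2 h2).2.2.1⟩
  have e13 : Cat3 G → ¬ Cat1 G := fun h3 h1 => by
    obtain ⟨p, -, h⟩ := adjp.1 h3.2.1
    exact h1.2 ⟨p, 3, 5, h⟩
  have e14 : Cat4 G → ¬ Cat1 G := fun h3 h1 => by
    obtain ⟨p, -, h⟩ := adjp.1 h3.2.1
    exact h1.2 ⟨p, 3, 5, h⟩
  have e23 : Cat3 G → ¬ Cat2 G := fun h3 h2 => by
    obtain ⟨p, hp, h, -⟩ := adjp.1 h3.2.1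
    exact (adj2 h2).2.2.2 p hp h
  have e24 : Cat4 G → ¬ Cat2 G := fun h3 h2 => by
    obtain ⟨p, hp, h, -⟩ := adjp.1 h3.2.1
    exact (adj2 h2).2.2.2 p hp h
  have e34 : Cat4 G → ¬ Cat3 G := fun h4 h3 => by
    obtain ⟨p, hp, h, -⟩ := adjp.1 h3.2.1
    have c3 := h3.2.2 p h.1 h.2.2.2.1 hp
    have c4 := h4.2.2 p h.1 h.2.2.2.1 hp
    clear e12 e13 e14 e23 e24 adj2 adjp symm hcol h3 h4
    tauto
  suffices hsuff : Cat1 G ∨ Cat2 G ∨ Cat3 G ∨ Cat4 G by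
    rcases hsuff with h | h | h | h
    · exact Or.inl ⟨h, fun k => e12 k h, fun k => e13 k h, fun k => e14 k h⟩
    · exact Or.inr (Or.inl ⟨e12 h, h, fun k => e23 k h, fun k => e24 k h⟩)
    · exact Or.inr (Or.inr (Or.inl ⟨e13 h, e23 h, h, fun k => e34 k h⟩))
    · exact Or.inr (Or.inr (Or.inr ⟨e14 h, e24 h, e34 h, h⟩))
  by_cases htri : ∃ a b c : ℕ, CompAdj G a b ∧ CompAdj G a c ∧ CompAdj G b c
  · right
    obtain ⟨a, b, c, hab, hac, hbc⟩ := htri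
    obtain ⟨hns, h3, h5⟩ := tri hP hab hac hbc
    obtain ⟨x, hx3, hx5, h35⟩ : ∃ x, CompAdj G x 3 ∧ CompAdj G x 5 ∧ CompAdj G 3 5 := by
      rcases h3 with rfl | rfl | rfl <;> rcases h5 with h5 | h5 | h5 <;> (try subst h5) <;>
        first
        | omega
        | exact ⟨_, hab, hac, hbc⟩
        | exact ⟨_, hac, hab, symm hbc⟩
        | exact ⟨_, symm hab, hbc, hac⟩
        | exact ⟨_, hbc, symm hab, symm hac⟩
        | exact ⟨_, symm hac, symm hbc, hab⟩
        | exact ⟨_, symm hbc, symm hac, symm hab⟩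
    by_cases hx2 : x = 2
    · left
      subst hx2
      exact ⟨hcol, hx3.2.2.2.1, h35.2.2.2.1, h35.2.2.2.2.1, hx3.2.2.2.2.2, hx5.2.2.2.2.2,
        h35.2.2.2.2.2, fun r _ _ hr => ⟨S3a hP hns hr hx3.2.2.2.2.2, S3b hP hns hr hx3.2.2.2.2.2⟩⟩
    · right
      have hx : x ∉ ({2, 3, 5} : Set ℕ) := by
        rintro (h | h | h)
        · exact hx2 h
        · exact hx3.2.2.1 h
        · exact hx5.2.2.1 h
      have r5 : Rank1 5 G := rank1_of_adj hP hns hx5.1 hx hx5.2.2.2.1 (Or.inr (Or.inr rfl))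
        (symm hx5).2.2.2.2.2
      have hex := adjp.2 ⟨x, hx, hx3, hx5, h35⟩
      have a35 : ∀ r, r ∉ ({2, 3, 5} : Set ℕ) → CompAdj G r 3 → CompAdj G r 5 := fun r hr h =>
        S4a hP hns hr r5 h35.2.2.2.2.2 h
      by_cases h2 : ∃ r, r ∉ ({2, 3, 5} : Set ℕ) ∧ CompAdj G r 2
      · left
        obtain ⟨r0, hr0, hr02⟩ := h2
        have r2 : Rank1 2 G := rank1_of_adj hP hns hr02.1 hr0 hr02.2.2.2.1 (Or.inl rfl)
          (symm hr02).2.2.2.2.2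
        refine ⟨hcol, hex, fun r _ _ hr => ?_⟩
        have b1 := a35 r hr
        have b2 : CompAdj G r 3 → CompAdj G r 2 := fun h => S4b hP hns hr r2 h35.2.2.2.2.2 h
        clear e12 e13 e14 e23 e24 e34 adj2 adjp symm hcol hex a35
        by_cases c1 : CompAdj G r 3 <;> by_cases c2 : CompAdj G r 5 <;> by_cases c3 : CompAdj G r 2 <;>
          simp_all only [not_true_eq_false, not_false_eq_true, true_and, and_true, false_and, and_false,
            true_or, or_true, false_or, or_false, forall_const, imp_false]
      · right
        refine ⟨hcol, hex, fun r _ _ hr => ?_⟩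
        have b1 := a35 r hr
        have b2 : ¬ CompAdj G r 2 := fun h => h2 ⟨r, hr, h⟩
        clear e12 e13 e14 e23 e24 e34 adj2 adjp symm hcol hex a35
        by_cases c1 : CompAdj G r 3 <;> by_cases c2 : CompAdj G r 5 <;> by_cases c3 : CompAdj G r 2 <;>
          simp_all only [not_true_eq_false, not_false_eq_true, true_and, and_true, false_and, and_false,
            true_or, or_true, false_or, or_false, forall_const, imp_false]
  · exact Or.inl ⟨hcol, htri⟩
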